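/- arXiv:math/0703415 — 4 statements merged into one kernel-verified Lean document; each statement's English description precedes it below -/
import Mathlib

section
/- Let d ≥ 1 and let f : (0,∞) → ℝ be measurable such that r²f(r) is nonnegative and bounded. Then lim_{R→∞} (1/R) ∫₀^R r² f(r) dr = lim_{h→0+} (1/h) · π^{−3/2} (Γ((d+1)/2)/Γ(d/2)) ∫₀^∞ (1 − Γ(d/2) · J_{d/2−1}(2πhr)/(πhr)^{d/2−1}) f(r) dr, in the sense that if either of the two limits exists (finitely), then both exist and they are equal. -/
open MeasureTheory Metric Set Real Complex Filter
open scoped FourierTransform RealInnerProductSpace Pointwise ENNReal Topology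

noncomputable section

/-- The Euclidean space `ℝ^d`. -/
abbrev E (d : ℕ) := EuclideanSpace ℝ (Fin d)

/-- View a plain vector `Fin d → ℝ` as a point of Euclidean space. -/
def toE {d : ℕ} (v : Fin d → ℝ) : E d := (EuclideanSpace.equiv (Fin d) ℝ).symm v

/-- The point lattice `T = A ℤ^d`. -/
def latticeSet (d : ℕ) (A : Matrix (Fin d) (Fin d) ℝ) : Set (E d) :=
  {p | ∃ n : Fin d → ℤ, p = toE (A.mulVec fun i => (n i : ℝ))}

/-- The fundamental region `F_T = A [0,1)^d`. -/
def fundRegion (d : ℕ) (A : Matrix (Fin d) (Fin d) ℝ) : Set (E d) :=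
  (fun y => toE (A.mulVec y)) '' (Set.pi Set.univ fun _ : Fin d => Set.Ico (0 : ℝ) 1)

/-- Number of lattice points in the translate `D + x`. -/
def latticeCount (d : ℕ) (A : Matrix (Fin d) (Fin d) ℝ) (D : Set (E d)) (x : E d) : ℕ :=
  (((fun y => y + x) '' D) ∩ latticeSet d A).ncard

/-- The dual lattice `T* = {ξ | ξ·p ∈ ℤ for all p ∈ T}`. -/
def dualLattice (d : ℕ) (A : Matrix (Fin d) (Fin d) ℝ) : Set (E d) :=
  {ξ | ∀ p ∈ latticeSet d A, ∃ k : ℤ, ⟪ξ, p⟫ = (k : ℝ)}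

/-- The (complex-valued) indicator function of a set. -/
def indC {d : ℕ} (D : Set (E d)) : E d → ℂ := D.indicator 1

/-- The covariogram `γ_D(x) = ∫ I_D(y) I_D(y - x) dy`. -/
def covariogram {d : ℕ} (D : Set (E d)) (x : E d) : ℝ :=
  ∫ y, (D.indicator (1 : E d → ℝ) y) * (D.indicator (1 : E d → ℝ) (y - x))

/-- The normalized (probability) surface measure on the unit sphere `S^{d-1}`. -/
def sphereProb (d : ℕ) : Measure (sphere (0 : E d) 1) :=
  ((volume : Measure (E d)).toSphere Set.univ)⁻¹ • (volume : Measure (E d)).toSphere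

/-- Rotational quadratic average of the modulus of the Fourier transform of `I_D`:
`γ̄̂_D(ρ) = ∫_{S^{d-1}} |Î_D(ρ ξ)|² dσ(ξ)`. -/
def avgFT {d : ℕ} (D : Set (E d)) (ρ : ℝ) : ℝ :=
  ∫ ξ : sphere (0 : E d) 1, ‖𝓕 (indC D) (ρ • (ξ : E d))‖ ^ 2 ∂(sphereProb d)

/-- The isotropic covariogram, via its (equivalent) definition as the spherical average
`γ̄_D(u) = ∫_{S^{d-1}} γ_D(u ξ) dσ(ξ)`. -/
def isoCov {d : ℕ} (D : Set (E d)) (u : ℝ) : ℝ :=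
  ∫ ξ : sphere (0 : E d) 1, covariogram D (u • (ξ : E d)) ∂(sphereProb d)

/-- Bessel function of the first kind (power series definition, real order). -/
def besselJ (ν : ℝ) (z : ℝ) : ℝ :=
  ∑' k : ℕ, (-1 : ℝ) ^ k * (z / 2) ^ (ν + 2 * k) / (Nat.factorial k * Real.Gamma (ν + k + 1))

/-- `κ_d`, the volume of the unit ball in `ℝ^d`. -/
def unitBallVol (d : ℕ) : ℝ := Real.pi ^ ((d : ℝ) / 2) / Real.Gamma ((d : ℝ) / 2 + 1)

/-- The image of a set `D` under the rotation given by a matrix `M`. -/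
def rotSet {d : ℕ} (M : Matrix (Fin d) (Fin d) ℝ) (D : Set (E d)) : Set (E d) :=
  (fun y => toE (M.mulVec (EuclideanSpace.equiv (Fin d) ℝ y))) '' D

/-- The special orthogonal group `SO(d)`, as a set of matrices. -/
def SOSet (d : ℕ) : Set (Matrix (Fin d) (Fin d) ℝ) :=
  {M | M ∈ Matrix.specialOrthogonalGroup (Fin d) ℝ}

/-- Borel measurable structure on the space of `d × d` real matrices. -/
instance matrixMeasurableSpace {d : ℕ} : MeasurableSpace (Matrix (Fin d) (Fin d) ℝ) :=
  borel _

instance matrixBorelSpace {d : ℕ} : BorelSpace (Matrix (Fin d) (Fin d) ℝ) := ⟨rfl⟩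

/-! ### The normalised Bessel function -/

/-- Rising factorial. -/
def risQ (a : ℝ) (k : ℕ) : ℝ := ∏ i ∈ Finset.range k, (a + i)

theorem risQ_succ (a : ℝ) (k : ℕ) : risQ a (k + 1) = risQ a k * (a + k) := by
  simp [risQ, Finset.prod_range_succ]

theorem risQ_succ' (a : ℝ) (k : ℕ) : risQ a (k + 1) = a * risQ (a + 1) k := by
  simp only [risQ, Finset.prod_range_succ']
  rw [mul_comm]
  congr 1
  · simp
  · apply Finset.prod_congr rfl
    intro i _
    push_cast
    ring

theorem risQ_pos {a : ℝ} (ha : 0 < a) (k : ℕ) : 0 < risQ a k :=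
  Finset.prod_pos fun i _ => by positivity

theorem risQ_ge {a : ℝ} (ha : 1 / 2 ≤ a) (k : ℕ) : (1 / 2 : ℝ) ^ k ≤ risQ a k := by
  induction k with
  | zero => simp [risQ]
  | succ k ih =>
    rw [pow_succ, risQ_succ]
    have : (0 : ℝ) ≤ k := Nat.cast_nonneg k
    exact mul_le_mul ih (by linarith) (by norm_num) (risQ_pos (by linarith) k).le

theorem Gamma_add_nat {a : ℝ} (ha : 0 < a) (k : ℕ) :
    Real.Gamma (a + k) = risQ a k * Real.Gamma a := by
  induction k with
  | zero => simp [risQ]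
  | succ k ih =>
    push_cast
    rw [← add_assoc, Real.Gamma_add_one (by positivity), ih, risQ_succ]
    ring

/-- `p_a(y) = Σ (-y)^k / (k! (a)_k)`. -/
def pT (a y : ℝ) (k : ℕ) : ℝ := (-y) ^ k / (k.factorial * risQ a k)

def pP (a y : ℝ) : ℝ := ∑' k : ℕ, pT a y k

theorem pT_summable_norm {a : ℝ} (ha : 1 / 2 ≤ a) (y : ℝ) : Summable fun k => ‖pT a y k‖ := by
  refine Summable.of_nonneg_of_le (fun _ => norm_nonneg _) (fun k => ?_)
    (Real.summable_pow_div_factorial (2 * |y|))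
  have h1 := risQ_ge ha k
  have h2 := risQ_pos (a := a) (by linarith) k
  have h3 : (0 : ℝ) < k.factorial := by positivity
  rw [pT, norm_div, norm_mul, norm_pow, norm_neg, Real.norm_eq_abs, Real.norm_eq_abs,
    Real.norm_eq_abs, abs_of_pos h3, abs_of_pos h2, div_le_div_iff₀ (by positivity) h3, mul_pow]
  have h4 : 1 ≤ 2 ^ k * risQ a k := by
    calc (1 : ℝ) = 2 ^ k * (1 / 2) ^ k := by rw [← mul_pow]; norm_num
      _ ≤ _ := by gcongr
  have h5 : 0 ≤ |y| ^ k * k.factorial := by positivity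
  nlinarith

theorem pT_summable {a : ℝ} (ha : 1 / 2 ≤ a) (y : ℝ) : Summable fun k => pT a y k :=
  (pT_summable_norm ha y).of_norm

theorem pT_deriv_aux {a : ℝ} (ha : 0 < a) (y : ℝ) (k : ℕ) :
    ((k + 1 : ℕ) : ℝ) * (-y) ^ k * (-1) / ((k + 1).factorial * risQ a (k + 1))
      = -(1 / a) * pT (a + 1) y k := by
  have h2 := risQ_pos (a := a + 1) (by linarith) k
  have h3 : (0 : ℝ) < k.factorial := by positivity
  rw [pT, risQ_succ', Nat.factorial_succ]
  push_cast
  field_simp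

theorem pP_hasDerivAt {a : ℝ} (ha : 1 / 2 ≤ a) (y : ℝ) :
    HasDerivAt (pP a) (-(1 / a) * pP (a + 1) y) y := by
  have ha0 : 0 < a := by linarith
  set r := |y| + 1 with hr
  have hr0 : 0 < r := by positivity
  have key := hasDerivAt_tsum_of_isPreconnected (𝕜 := ℝ) (F := ℝ)
    (u := fun n : ℕ => (n : ℝ) * r ^ (n - 1) / (n.factorial * risQ a n))
    (g := fun n y => pT a y n)
    (g' := fun n y => (n : ℝ) * (-y) ^ (n - 1) * (-1) / (n.factorial * risQ a n))
    (t := Metric.ball 0 r) (y₀ := 0) (y := y) ?_ Metric.isOpen_ball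
    (convex_ball 0 r).isPreconnected ?_ ?_ (by simpa using hr0) (pT_summable ha 0)
    (by simp [hr])
  · refine HasDerivAt.congr_deriv (f := pP a) key ?_
    rw [Summable.tsum_eq_zero_add]
    · simp only [Nat.add_sub_cancel, pT_deriv_aux ha0, tsum_mul_left]
      simp [pP]
    · rw [← summable_nat_add_iff 1]
      simp only [Nat.add_sub_cancel, pT_deriv_aux ha0]
      exact (pT_summable (by linarith) y).mul_left _
  · rw [← summable_nat_add_iff 1]
    simp only [Nat.add_sub_cancel]
    refine (((pT_summable (a := a + 1) (by linarith) (-r)).mul_left (1 / a))).congr fun k => ?_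
    have := pT_deriv_aux ha0 (-r) k
    rw [neg_neg] at this
    have e : 1 / a * pT (a + 1) (-r) k = - (-(1 / a) * pT (a + 1) (-r) k) := by ring
    rw [e, ← this]
    ring
  · intro n y _
    unfold pT
    have := ((hasDerivAt_neg y).pow n).div_const (n.factorial * risQ a n)
    simpa using this
  · intro n y hy
    have h2 := risQ_pos (a := a) (by linarith) n
    have h3 : (0 : ℝ) < n.factorial := by positivity
    have hy' : |y| ≤ r := by
      have := Metric.mem_ball.1 hy
      rw [Real.dist_eq, sub_zero] at this
      exact this.le
    simp only [norm_div, norm_mul, norm_pow, norm_neg, Real.norm_eq_abs, Nat.abs_cast, norm_one,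
      mul_one, abs_of_pos h2]
    gcongr

theorem pP_rec {a : ℝ} (ha : 1 / 2 ≤ a) (y : ℝ) :
    pP (a + 1) y - pP a y = y * (1 / (a * (a + 1)) * pP (a + 2) y) := by
  have s1 := pT_summable (a := a + 1) (by linarith) y
  have s0 := pT_summable ha y
  unfold pP
  rw [← Summable.tsum_sub s1 s0, Summable.tsum_eq_zero_add (s1.sub s0), ← tsum_mul_left,
    ← tsum_mul_left]
  have : pT (a + 1) y 0 - pT a y 0 = 0 := by simp [pT, risQ]
  rw [this, zero_add]
  congr 1
  ext k
  have ha0 : 0 < a := by linarith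
  have hQ := risQ_pos (a := a + 2) (by linarith) k
  have h3 : (0 : ℝ) < k.factorial := by positivity
  have e1 : risQ (a + 1) (k + 1) = (a + 1) * risQ (a + 2) k := by
    rw [risQ_succ']; congr 2; ring
  have hk : (0 : ℝ) < a + 1 + k := by positivity
  have e2 : risQ (a + 1) k = (a + 1) * risQ (a + 2) k / (a + 1 + k) := by
    rw [eq_div_iff hk.ne', ← e1, risQ_succ]
  simp only [pT, e1, risQ_succ' a, e2, Nat.factorial_succ, pow_succ]
  push_cast
  field_simp
  ring

theorem pP_zero (a : ℝ) : pP a 0 = 1 := by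
  unfold pP
  rw [tsum_eq_single 0]
  · simp [pT, risQ]
  · intro k hk
    simp [pT, hk]

theorem pP_abs_le {a : ℝ} (ha : 1 / 2 ≤ a) {y : ℝ} (hy : 0 ≤ y) : |pP a y| ≤ 1 := by
  have ha0 : 0 < a := by linarith
  set En : ℝ → ℝ := fun y => pP a y ^ 2 + y * (1 / a * pP (a + 1) y) ^ 2 with hE
  have hd : ∀ y, HasDerivAt En ((1 / a * pP (a + 1) y) ^ 2 * (1 - 2 * a)) y := by
    intro y
    have d0 := pP_hasDerivAt ha y
    have d1 := pP_hasDerivAt (a := a + 1) (by linarith) y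
    have hr := pP_rec ha y
    rw [show a + 1 + 1 = a + 2 by ring] at d1
    have := (d0.pow 2).add ((hasDerivAt_id y).mul ((d1.const_mul (1 / a)).pow 2))
    refine this.congr_deriv ?_
    simp only [id, Pi.pow_apply]
    have e : pP a y = pP (a + 1) y - y * (1 / (a * (a + 1)) * pP (a + 2) y) := by linarith
    rw [e]
    have : a + 1 ≠ 0 := by positivity
    push_cast
    field_simp
    ring
  have hanti : Antitone En := by
    apply antitone_of_hasDerivAt_nonpos hd
    intro y
    exact mul_nonpos_of_nonneg_of_nonpos (sq_nonneg _) (by linarith)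
  have h := hanti hy
  simp only [hE, pP_zero, zero_mul, add_zero, one_pow] at h
  have : 0 ≤ y * (1 / a * pP (a + 1) y) ^ 2 := by positivity
  exact abs_le_one_iff_mul_self_le_one.2 (by nlinarith)

theorem pP_continuous {a : ℝ} (ha : 1 / 2 ≤ a) : Continuous (pP a) :=
  continuous_iff_continuousAt.2 fun y => (pP_hasDerivAt ha y).continuousAt

theorem pP_one_sub_le {a : ℝ} (ha : 1 / 2 ≤ a) {y : ℝ} (hy : 0 ≤ y) : |1 - pP a y| ≤ 2 * y := by
  have ha0 : 0 < a := by linarith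
  have := (convex_Ici (0 : ℝ)).norm_image_sub_le_of_norm_hasDerivWithin_le (f := pP a)
    (f' := fun y => -(1 / a) * pP (a + 1) y) (C := 2) (x := 0) (y := y)
    (fun x _ => (pP_hasDerivAt ha x).hasDerivWithinAt) ?_ (by simp) (by simpa using hy)
  · rw [pP_zero, Real.norm_eq_abs, Real.norm_eq_abs, sub_zero, abs_of_nonneg hy, abs_sub_comm]
      at this
    exact this
  · intro x hx
    rw [norm_mul, norm_neg, Real.norm_eq_abs, Real.norm_eq_abs, abs_of_pos (by positivity)]
    have h1 := pP_abs_le (a := a + 1) (by linarith) (y := x) hx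
    have h2 : 1 / a ≤ 2 := by rw [div_le_iff₀ ha0]; linarith
    calc 1 / a * |pP (a + 1) x| ≤ 2 * 1 := by gcongr
      _ = 2 := by ring

theorem besselJ_eq {a : ℝ} (ha : 1 / 2 ≤ a) {z : ℝ} (hz : 0 < z) :
    Real.Gamma a * besselJ (a - 1) (2 * z) / z ^ (a - 1) = pP a (z ^ 2) := by
  have ha0 : 0 < a := by linarith
  unfold besselJ pP
  rw [← tsum_mul_left, ← tsum_div_const]
  congr 1
  ext k
  have hG := Real.Gamma_pos_of_pos ha0
  have hq := risQ_pos ha0 k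
  have hzp : 0 < z ^ (a - 1) := Real.rpow_pos_of_pos hz _
  rw [show a - 1 + (k : ℝ) + 1 = a + k by ring, Gamma_add_nat ha0, show 2 * z / 2 = z by ring,
    Real.rpow_add hz, show (2 * (k : ℝ)) = ((2 * k : ℕ) : ℝ) by push_cast; ring,
    Real.rpow_natCast, pT, pow_mul, neg_pow (z ^ 2)]
  field_simp

/-- Gamma-weighted average of `p_a`. -/
theorem pP_average {a c y : ℝ} (ha : 1 / 2 ≤ a) (hc : 0 < c) (hy : 0 ≤ y) (S : ℝ)
    (hS : HasSum (fun k => pT a y k * Real.Gamma (c + k)) S)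
    (hS' : Summable (fun k => ‖pT a y k‖ * Real.Gamma (c + k))) :
    IntegrableOn (fun s => Real.exp (-s) * s ^ (c - 1) * pP a (y * s)) (Ioi 0) ∧
    ∫ s in Ioi (0 : ℝ), Real.exp (-s) * s ^ (c - 1) * pP a (y * s) = S := by
  have e : ∀ k : ℕ, ∀ s ∈ Ioi (0 : ℝ), Real.exp (-s) * s ^ (c - 1) * pT a (y * s) k
      = pT a y k * (Real.exp (-s) * s ^ (c + k - 1)) := by
    intro k s hs
    have hs : 0 < s := hs
    rw [show c + k - 1 = c - 1 + k by ring, Real.rpow_add hs, Real.rpow_natCast, pT, pT,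
      show -(y * s) = -y * s by ring, mul_pow]
    ring
  have hi : ∀ k : ℕ, IntegrableOn (fun s => Real.exp (-s) * s ^ (c + k - 1)) (Ioi 0) :=
    fun k => Real.GammaIntegral_convergent (by positivity)
  have hI : ∀ k : ℕ, ∫ s in Ioi (0 : ℝ), Real.exp (-s) * s ^ (c - 1) * pT a (y * s) k
      = pT a y k * Real.Gamma (c + k) := by
    intro k
    rw [setIntegral_congr_fun measurableSet_Ioi (e k), integral_const_mul,
      Real.Gamma_eq_integral (by positivity)]
  have hInt : ∀ k : ℕ, IntegrableOn (fun s => Real.exp (-s) * s ^ (c - 1) * pT a (y * s) k)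
      (Ioi 0) := by
    intro k
    exact (integrableOn_congr_fun (e k) measurableSet_Ioi).2 ((hi k).const_mul _)
  have hN : ∀ k : ℕ, ∫ s in Ioi (0 : ℝ), ‖Real.exp (-s) * s ^ (c - 1) * pT a (y * s) k‖
      = ‖pT a y k‖ * Real.Gamma (c + k) := by
    intro k
    rw [Real.Gamma_eq_integral (by positivity), ← integral_const_mul]
    apply setIntegral_congr_fun measurableSet_Ioi
    intro s hs
    have hs' : 0 < s := hs
    simp only
    rw [e k s hs, norm_mul, Real.norm_of_nonneg (r := Real.exp (-s) * s ^ (c + k - 1)) (by positivity)]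
  constructor
  · have hm : IntegrableOn (fun s => Real.exp (-s) * s ^ (c - 1)) (Ioi 0) :=
      Real.GammaIntegral_convergent hc
    refine Integrable.mul_bdd (c := 1) hm
      ((pP_continuous ha).comp (by fun_prop)).aestronglyMeasurable ?_
    filter_upwards [ae_restrict_mem measurableSet_Ioi] with s hs
    have hs' : 0 < s := hs
    exact pP_abs_le ha (by positivity)
  · have h1 := hasSum_integral_of_summable_integral_norm hInt (by simpa only [hN] using hS')
    simp only [hI, tsum_mul_left] at h1
    exact h1.unique hS

/-! ### The closed subspace of good kernels -/

/-- Kernels for which the averages of `g` converge to the expected value. -/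
def Good (g : ℝ → ℝ) (L : ℝ) (κ : ℝ → ℝ) : Prop :=
  IntegrableOn κ (Ioi 0) ∧
    Tendsto (fun R : ℝ => ∫ x in Ioi (0 : ℝ), κ x * g (R * x)) atTop
      (𝓝 (L * ∫ x in Ioi (0 : ℝ), κ x))

section Good
variable {g : ℝ → ℝ} {L C : ℝ}

theorem int_mul_g (hg : Measurable g) (hb : ∀ r, |g r| ≤ C) {κ : ℝ → ℝ}
    (hκ : IntegrableOn κ (Ioi 0)) (R : ℝ) : IntegrableOn (fun x => κ x * g (R * x)) (Ioi 0) :=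
  Integrable.mul_bdd (c := C) hκ (hg.comp (measurable_const_mul R)).aestronglyMeasurable
    (Eventually.of_forall fun _ => hb _)

theorem abs_int_mul_g (hb : ∀ r, |g r| ≤ C) {κ : ℝ → ℝ}
    (hκ : IntegrableOn κ (Ioi 0)) (R : ℝ) :
    |∫ x in Ioi (0 : ℝ), κ x * g (R * x)| ≤ C * ∫ x in Ioi (0 : ℝ), |κ x| := by
  rw [← integral_const_mul]
  rw [← Real.norm_eq_abs]
  refine norm_integral_le_of_norm_le (hκ.abs.const_mul C) (Eventually.of_forall fun x => ?_)
  rw [norm_mul, mul_comm]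
  exact mul_le_mul_of_nonneg_right (hb _) (abs_nonneg _)

theorem Good.congr {κ κ' : ℝ → ℝ} (h : Good g L κ) (e : ∀ x, 0 < x → κ x = κ' x) :
    Good g L κ' := by
  have e' : EqOn κ κ' (Ioi 0) := e
  refine ⟨(integrableOn_congr_fun e' measurableSet_Ioi).1 h.1, ?_⟩
  rw [← setIntegral_congr_fun measurableSet_Ioi e']
  refine h.2.congr fun R => ?_
  apply setIntegral_congr_fun measurableSet_Ioi
  intro x hx
  simp only [e' hx]

theorem Good.add (hg : Measurable g) (hb : ∀ r, |g r| ≤ C) {κ κ' : ℝ → ℝ} (h : Good g L κ)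
    (h' : Good g L κ') : Good g L (fun x => κ x + κ' x) := by
  refine ⟨h.1.add h'.1, ?_⟩
  rw [integral_add h.1 h'.1, mul_add]
  refine (h.2.add h'.2).congr fun R => ?_
  rw [← integral_add (int_mul_g hg hb h.1 R) (int_mul_g hg hb h'.1 R)]
  simp only [add_mul]

theorem Good.smul {κ : ℝ → ℝ} (h : Good g L κ) (c : ℝ) : Good g L (fun x => c * κ x) := by
  refine ⟨h.1.const_mul c, ?_⟩
  rw [integral_const_mul, show L * (c * ∫ x in Ioi (0 : ℝ), κ x) =
    c * (L * ∫ x in Ioi (0 : ℝ), κ x) by ring]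
  refine (h.2.const_mul c).congr fun R => ?_
  rw [← integral_const_mul]
  simp only [mul_assoc]

theorem dil_integrable {κ : ℝ → ℝ} (h : IntegrableOn κ (Ioi 0)) {b : ℝ} (hb : 0 < b) :
    IntegrableOn (fun x => κ (b * x)) (Ioi 0) := by
  rw [integrableOn_Ioi_comp_mul_left_iff κ 0 hb, mul_zero]
  exact h

theorem dil_int (κ : ℝ → ℝ) {b : ℝ} (hb : 0 < b) :
    ∫ x in Ioi (0 : ℝ), κ (b * x) = b⁻¹ * ∫ x in Ioi (0 : ℝ), κ x := by
  rw [integral_comp_mul_left_Ioi κ 0 hb, mul_zero, smul_eq_mul]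

theorem dil_int_g (κ : ℝ → ℝ) {b : ℝ} (hb : 0 < b) (R : ℝ) :
    ∫ x in Ioi (0 : ℝ), κ (b * x) * g (R * x)
      = b⁻¹ * ∫ x in Ioi (0 : ℝ), κ x * g (R / b * x) := by
  rw [← dil_int (fun x => κ x * g (R / b * x)) hb]
  congr 1
  ext x
  congr 2
  field_simp

theorem Good.dil {κ : ℝ → ℝ} (h : Good g L κ) {b : ℝ} (hb : 0 < b) :
    Good g L (fun x => κ (b * x)) := by
  refine ⟨dil_integrable h.1 hb, ?_⟩
  simp only [dil_int κ hb, dil_int_g κ hb]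
  rw [show L * (b⁻¹ * ∫ x in Ioi (0 : ℝ), κ x) = b⁻¹ * (L * ∫ x in Ioi (0 : ℝ), κ x) by ring]
  exact (h.2.comp (tendsto_id.atTop_div_const hb)).const_mul _

theorem Good.closed (hg : Measurable g) (hb : ∀ r, |g r| ≤ C) {κ : ℝ → ℝ}
    (hκ : IntegrableOn κ (Ioi 0))
    (h : ∀ ε : ℝ, 0 < ε → ∃ κ', Good g L κ' ∧ ∫ x in Ioi (0 : ℝ), |κ x - κ' x| ≤ ε) :
    Good g L κ := by
  refine ⟨hκ, ?_⟩
  have hC : 0 ≤ C := (abs_nonneg _).trans (hb 0)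
  rw [Metric.tendsto_atTop]
  intro ε hε
  set δ := ε / (2 * (C + |L| + 1)) with hδ
  have hD : 0 < C + |L| + 1 := by positivity
  have hδ0 : 0 < δ := by positivity
  obtain ⟨κ', hG, hd⟩ := h δ hδ0
  obtain ⟨N, hN⟩ := (Metric.tendsto_atTop.1 hG.2) (ε / 2) (by positivity)
  refine ⟨N, fun R hR => ?_⟩
  have h1 := hN R hR
  rw [Real.dist_eq] at h1 ⊢
  have hdi : IntegrableOn (fun x => κ x - κ' x) (Ioi 0) := hκ.sub hG.1
  have h2 := abs_int_mul_g hb hdi R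
  have h3 : ∫ x in Ioi (0 : ℝ), (κ x - κ' x) * g (R * x) =
      (∫ x in Ioi (0 : ℝ), κ x * g (R * x)) - ∫ x in Ioi (0 : ℝ), κ' x * g (R * x) := by
    rw [← integral_sub (int_mul_g hg hb hκ R) (int_mul_g hg hb hG.1 R)]
    simp only [sub_mul]
  have h4 : |(∫ x in Ioi (0 : ℝ), κ x) - ∫ x in Ioi (0 : ℝ), κ' x| ≤ δ := by
    rw [← integral_sub hκ hG.1]
    exact (abs_integral_le_integral_abs).trans hd
  have h5 : C * ∫ x in Ioi (0 : ℝ), |κ x - κ' x| ≤ C * δ := by gcongr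
  have h6 : |L * ((∫ x in Ioi (0 : ℝ), κ x) - ∫ x in Ioi (0 : ℝ), κ' x)| ≤ |L| * δ := by
    rw [abs_mul]; gcongr
  rw [h3] at h2
  have h7 : (C + |L| + 1) * δ = ε / 2 := by rw [hδ]; field_simp
  rw [mul_sub] at h6
  rw [abs_lt] at h1 ⊢
  have h2' := abs_le.1 (h2.trans h5)
  have h6' := abs_le.1 h6
  constructor <;> nlinarith

/-- Joint integrability for averages of dilates. -/
theorem avg_prod_integrable {κ w b φ : ℝ → ℝ} (hκm : Measurable κ) (hκ : IntegrableOn κ (Ioi 0))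
    (hw : Measurable w) (hbm : Measurable b) (hb0 : ∀ t, 0 < t → 0 < b t)
    (hwb : IntegrableOn (fun t => w t * (b t)⁻¹) (Ioi 0)) (hφ : Measurable φ)
    (hφb : ∀ x, |φ x| ≤ C) :
    Integrable (Function.uncurry fun t x => w t * (κ (b t * x) * φ x))
      ((volume.restrict (Ioi (0 : ℝ))).prod (volume.restrict (Ioi (0 : ℝ)))) := by
  have hm : Measurable (Function.uncurry fun t x => w t * (κ (b t * x) * φ x)) := by
    unfold Function.uncurry
    fun_prop
  have hint : ∀ t, 0 < t → IntegrableOn (fun x => κ (b t * x) * φ x) (Ioi 0) := fun t ht =>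
    Integrable.mul_bdd (c := C) (dil_integrable hκ (hb0 t ht)) hφ.aestronglyMeasurable
      (Eventually.of_forall hφb)
  rw [integrable_prod_iff hm.aestronglyMeasurable]
  constructor
  · filter_upwards [ae_restrict_mem measurableSet_Ioi] with t ht
    exact (hint t ht).const_mul (w t)
  · refine Integrable.mono' (hwb.abs.mul_const (C * ∫ x in Ioi (0 : ℝ), |κ x|)) ?_ ?_
    · exact (hm.norm.aestronglyMeasurable).integral_prod_right'
    · filter_upwards [ae_restrict_mem measurableSet_Ioi] with t ht
      have ht' := hb0 t ht
      simp only [Function.uncurry, norm_mul, Real.norm_eq_abs]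
      rw [integral_const_mul, abs_mul, abs_abs, abs_mul, abs_of_pos (inv_pos.2 ht'), mul_assoc]
      gcongr
      rw [abs_of_nonneg (integral_nonneg fun x => by positivity)]
      calc ∫ x in Ioi (0 : ℝ), |κ (b t * x)| * |φ x|
          ≤ ∫ x in Ioi (0 : ℝ), |κ (b t * x)| * C := by
            refine integral_mono ?_ ((dil_integrable hκ ht').abs.mul_const C) fun x => ?_
            · simpa only [abs_mul] using (hint t ht).abs
            · exact mul_le_mul_of_nonneg_left (hφb x) (abs_nonneg _)
        _ = (b t)⁻¹ * (C * ∫ x in Ioi (0 : ℝ), |κ x|) := by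
            rw [integral_mul_const, dil_int (fun x => |κ x|) ht']
            ring

theorem avg_integral {κ w b : ℝ → ℝ} (hκm : Measurable κ) (hκ : IntegrableOn κ (Ioi 0))
    (hw : Measurable w) (hbm : Measurable b) (hb0 : ∀ t, 0 < t → 0 < b t)
    (hwb : IntegrableOn (fun t => w t * (b t)⁻¹) (Ioi 0)) :
    IntegrableOn (fun x => ∫ t in Ioi (0 : ℝ), w t * κ (b t * x)) (Ioi 0) ∧
    ∫ x in Ioi (0 : ℝ), ∫ t in Ioi (0 : ℝ), w t * κ (b t * x)
      = (∫ t in Ioi (0 : ℝ), w t * (b t)⁻¹) * ∫ x in Ioi (0 : ℝ), κ x := by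
  have hI := avg_prod_integrable (C := 1) (φ := fun _ => 1) hκm hκ hw hbm hb0 hwb
    measurable_const (by simp)
  simp only [mul_one] at hI
  refine ⟨hI.integral_prod_right, ?_⟩
  rw [← integral_integral_swap hI, ← integral_mul_const]
  apply setIntegral_congr_fun measurableSet_Ioi
  intro t ht
  simp only
  rw [integral_const_mul, dil_int κ (hb0 t ht)]
  ring

theorem Good.avg (hg : Measurable g) (hb : ∀ r, |g r| ≤ C) {κ w b : ℝ → ℝ} (hκm : Measurable κ)
    (hκ : Good g L κ)
    (hw : Measurable w) (hbm : Measurable b) (hb0 : ∀ t, 0 < t → 0 < b t)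
    (hwb : IntegrableOn (fun t => w t * (b t)⁻¹) (Ioi 0)) :
    Good g L (fun x => ∫ t in Ioi (0 : ℝ), w t * κ (b t * x)) := by
  obtain ⟨h1, h2⟩ := avg_integral hκm hκ.1 hw hbm hb0 hwb
  refine ⟨h1, ?_⟩
  rw [h2]
  have hI := fun R : ℝ => avg_prod_integrable (C := C) (φ := fun x => g (R * x)) hκm hκ.1 hw hbm
    hb0 hwb (hg.comp (measurable_const_mul R)) (fun x => hb _)
  have e : ∀ R : ℝ, ∫ x in Ioi (0 : ℝ), (∫ t in Ioi (0 : ℝ), w t * κ (b t * x)) * g (R * x)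
      = ∫ t in Ioi (0 : ℝ), ∫ x in Ioi (0 : ℝ), w t * (κ (b t * x) * g (R * x)) := by
    intro R
    rw [integral_integral_swap (hI R)]
    congr 1
    ext x
    rw [← integral_mul_const]
    simp only [mul_assoc]
  simp only [e]
  rw [show L * ((∫ t in Ioi (0 : ℝ), w t * (b t)⁻¹) * ∫ x in Ioi (0 : ℝ), κ x) =
    ∫ t in Ioi (0 : ℝ), w t * (b t)⁻¹ * (L * ∫ x in Ioi (0 : ℝ), κ x) by
      rw [integral_mul_const]; ring]
  refine tendsto_integral_filter_of_dominated_convergence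
    (fun t => |w t * (b t)⁻¹| * (C * ∫ x in Ioi (0 : ℝ), |κ x|)) ?_ ?_ (hwb.abs.mul_const _) ?_
  · exact Eventually.of_forall fun R => (hI R).integral_prod_left.aestronglyMeasurable
  · refine Eventually.of_forall fun R => ?_
    filter_upwards [ae_restrict_mem measurableSet_Ioi] with t ht
    rw [integral_const_mul, dil_int_g κ (hb0 t ht), ← mul_assoc, norm_mul]
    exact mul_le_mul_of_nonneg_left (abs_int_mul_g hb hκ.1 _) (abs_nonneg _)
  · filter_upwards [ae_restrict_mem measurableSet_Ioi] with t ht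
    simp only [integral_const_mul, dil_int_g κ (hb0 t ht)]
    simp only [← mul_assoc (w t)]
    exact (hκ.2.comp (tendsto_id.atTop_div_const (hb0 t ht))).const_mul _

theorem gauss_int : IntegrableOn (fun x : ℝ => Real.exp (-x ^ 2)) (Ioi 0) := by
  have := (integrable_exp_neg_mul_sq (b := 1) one_pos).integrableOn (s := Ioi 0)
  simpa using this

theorem Good.poly (hg : Measurable g) (hb : ∀ r, |g r| ≤ C)
    (h : Good g L (fun x => Real.exp (-x ^ 2))) (p : Polynomial ℝ) :
    Good g L (fun x => Real.exp (-x ^ 2) * p.eval (Real.exp (-x ^ 2))) := by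
  induction p using Polynomial.induction_on' with
  | add p q hp hq =>
    refine (hp.add hg hb hq).congr fun x _ => ?_
    rw [Polynomial.eval_add]; ring
  | monomial n c =>
    have hn : (0 : ℝ) < n + 1 := by positivity
    refine ((h.dil (Real.sqrt_pos.2 hn)).smul c).congr fun x _ => ?_
    rw [Polynomial.eval_monomial, ← Real.exp_nat_mul, mul_pow, Real.sq_sqrt hn.le, mul_left_comm,
      ← Real.exp_add]
    congr 2
    ring

theorem Good.compact (hg : Measurable g) (hb : ∀ r, |g r| ≤ C)
    (h : Good g L (fun x => Real.exp (-x ^ 2))) {u : ℝ → ℝ} (hu : Continuous u)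
    (hc : HasCompactSupport u) : Good g L u := by
  refine Good.closed hg hb (hu.integrable_of_hasCompactSupport hc).integrableOn fun ε hε => ?_
  obtain ⟨N, hN0, hN⟩ : ∃ N : ℝ, 0 < N ∧ ∀ x, N ≤ x → u x = 0 := by
    obtain ⟨N, hN⟩ := hc.isCompact.isBounded.subset_closedBall 0
    refine ⟨|N| + 1, by positivity, fun x hx => ?_⟩
    by_contra hne
    have := hN (subset_tsupport u hne)
    rw [Metric.mem_closedBall, Real.dist_eq, sub_zero] at this
    linarith [le_abs_self x, le_abs_self N]
  set δ := Real.exp (-N ^ 2) with hδ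
  have hδ0 : 0 < δ := Real.exp_pos _
  set F : ℝ → ℝ := fun y => u (Real.sqrt (-Real.log (max y δ))) / max y δ with hF
  have hmax : ∀ y, max y δ ≠ 0 := fun y => (lt_max_of_lt_right hδ0).ne'
  have hFc : Continuous F := by
    have : Continuous fun y => Real.log (max y δ) :=
      Continuous.log (by fun_prop) hmax
    exact (hu.comp (this.neg.sqrt)).div (by fun_prop) hmax
  have hFe : ∀ x, 0 < x → u x = Real.exp (-x ^ 2) * F (Real.exp (-x ^ 2)) := by
    intro x hx
    rcases le_total x N with hxN | hxN
    · have : max (Real.exp (-x ^ 2)) δ = Real.exp (-x ^ 2) := by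
        apply max_eq_left
        apply Real.exp_le_exp.2
        nlinarith
      simp only [hF, this, Real.log_exp, neg_neg, Real.sqrt_sq hx.le]
      field_simp
    · have : max (Real.exp (-x ^ 2)) δ = δ := by
        apply max_eq_right
        apply Real.exp_le_exp.2
        nlinarith
      simp only [hF, this, hN x hxN]
      simp only [hδ, Real.log_exp, neg_neg, Real.sqrt_sq hN0.le, hN N le_rfl]
      simp
  set I := ∫ x in Ioi (0 : ℝ), Real.exp (-x ^ 2) with hI
  have hI0 : 0 ≤ I := integral_nonneg fun x => (Real.exp_pos _).le
  obtain ⟨p, hp⟩ := exists_polynomial_near_of_continuousOn 0 1 F hFc.continuousOn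
    (ε / (I + 1)) (by positivity)
  have hG := h.poly hg hb p
  refine ⟨_, hG, ?_⟩
  calc ∫ x in Ioi (0 : ℝ), |u x - Real.exp (-x ^ 2) * p.eval (Real.exp (-x ^ 2))|
      ≤ ∫ x in Ioi (0 : ℝ), Real.exp (-x ^ 2) * (ε / (I + 1)) := by
        refine setIntegral_mono_on ?_ (gauss_int.mul_const _) measurableSet_Ioi fun x hx => ?_
        · exact ((hu.integrable_of_hasCompactSupport hc).integrableOn.sub hG.1).abs
        · rw [hFe x hx, ← mul_sub, abs_mul, abs_of_pos (Real.exp_pos _), abs_sub_comm]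
          gcongr
          refine (hp _ ⟨(Real.exp_pos _).le, ?_⟩).le
          rw [Real.exp_le_one_iff]
          nlinarith
    _ = I * (ε / (I + 1)) := by rw [integral_mul_const]
    _ ≤ ε := by
        rw [mul_div_assoc', div_le_iff₀ (by positivity)]
        nlinarith

theorem Good.all (hg : Measurable g) (hb : ∀ r, |g r| ≤ C)
    (h : Good g L (fun x => Real.exp (-x ^ 2))) {κ : ℝ → ℝ} (hκ : IntegrableOn κ (Ioi 0)) :
    Good g L κ := by
  refine Good.closed hg hb hκ fun ε hε => ?_
  have hi : Integrable ((Ioi (0 : ℝ)).indicator κ) := hκ.integrable_indicator measurableSet_Ioi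
  obtain ⟨u, hc, hle, hu, hui⟩ := hi.exists_hasCompactSupport_integral_sub_le hε
  refine ⟨u, h.compact hg hb hu hc, le_trans ?_ hle⟩
  calc ∫ x in Ioi (0 : ℝ), |κ x - u x|
      = ∫ x in Ioi (0 : ℝ), ‖(Ioi (0 : ℝ)).indicator κ x - u x‖ := by
        apply setIntegral_congr_fun measurableSet_Ioi
        intro x hx
        simp only [indicator_of_mem hx, Real.norm_eq_abs]
    _ ≤ _ := setIntegral_le_integral (hi.sub hui).norm
        (Eventually.of_forall fun x => norm_nonneg _)

end Good

/-! ### The two kernels -/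

theorem exp_hasSum (x : ℝ) : HasSum (fun k : ℕ => x ^ k / k.factorial) (Real.exp x) := by
  rw [Real.exp_eq_exp_ℝ]
  exact NormedSpace.expSeries_div_hasSum_exp x

theorem exp_hasSum' (x : ℝ) : HasSum (fun k : ℕ => (k : ℝ) * (x ^ k / k.factorial))
    (x * Real.exp x) := by
  have h := (exp_hasSum x).mul_left x
  rw [← hasSum_nat_add_iff' 1]
  simp only [Finset.range_one, Finset.sum_singleton, Nat.cast_zero, zero_mul, sub_zero]
  refine h.congr_fun fun k => ?_
  rw [Nat.factorial_succ, pow_succ]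
  push_cast
  field_simp

/-- The Bessel kernel. -/
def kerK (a x : ℝ) : ℝ := (1 - pP a ((Real.pi * x) ^ 2)) / x ^ 2

theorem kerK_measurable {a : ℝ} (ha : 1 / 2 ≤ a) : Measurable (kerK a) := by
  have := (pP_continuous ha).measurable
  unfold kerK
  fun_prop

theorem kerK_integrable {a : ℝ} (ha : 1 / 2 ≤ a) : IntegrableOn (kerK a) (Ioi 0) := by
  refine Integrable.mono' (g := fun x => (2 * Real.pi ^ 2 + 2) * (1 + x ^ 2)⁻¹)
    (integrable_inv_one_add_sq.integrableOn.const_mul _)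
    (kerK_measurable ha).aestronglyMeasurable ?_
  filter_upwards [ae_restrict_mem measurableSet_Ioi] with x hx
  have hx : 0 < x := hx
  have h1 := pP_abs_le ha (sq_nonneg (Real.pi * x))
  have h2 := pP_one_sub_le ha (sq_nonneg (Real.pi * x))
  have h3 : |1 - pP a ((Real.pi * x) ^ 2)| ≤ 2 := by
    rw [abs_le] at h1 ⊢
    constructor <;> linarith
  rw [kerK, norm_div, Real.norm_eq_abs, Real.norm_of_nonneg (sq_nonneg x), ← div_eq_mul_inv,
    div_le_div_iff₀ (by positivity) (by positivity)]
  nlinarith [sq_nonneg x]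

/-- The weight. -/
def wt (a s : ℝ) : ℝ := Real.exp (-s) * s ^ a * (s - a)

theorem wt_measurable (a : ℝ) : Measurable (wt a) := by
  unfold wt
  fun_prop

theorem wt_int {a : ℝ} (ha : 1 / 2 ≤ a) :
    IntegrableOn (fun s => wt a s * (Real.sqrt s)⁻¹) (Ioi 0) ∧
    ∫ s in Ioi (0 : ℝ), wt a s * (Real.sqrt s)⁻¹ = Real.Gamma (a + 1 / 2) / 2 := by
  have i1 := Real.GammaIntegral_convergent (s := a + 1 / 2 + 1) (by linarith)
  have i2 := Real.GammaIntegral_convergent (s := a + 1 / 2) (by linarith)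
  have e : EqOn (fun s => wt a s * (Real.sqrt s)⁻¹)
      (fun s => Real.exp (-s) * s ^ (a + 1 / 2 + 1 - 1)
        - a * (Real.exp (-s) * s ^ (a + 1 / 2 - 1))) (Ioi 0) := by
    intro s hs
    have hs : 0 < s := hs
    simp only [wt]
    rw [show a + 1 / 2 + 1 - 1 = a + -(1 / 2) + 1 by ring,
      show a + 1 / 2 - 1 = a + -(1 / 2) by ring, Real.rpow_add_one hs.ne', Real.rpow_add hs,
      Real.sqrt_eq_rpow, Real.rpow_neg hs.le]
    ring
  constructor
  · exact (integrableOn_congr_fun e measurableSet_Ioi).2 (i1.sub (i2.const_mul a))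
  · rw [setIntegral_congr_fun measurableSet_Ioi e, integral_sub i1 (i2.const_mul a),
      integral_const_mul, ← Real.Gamma_eq_integral (by linarith),
      ← Real.Gamma_eq_integral (by linarith), Real.Gamma_add_one (by linarith)]
    ring

theorem kerK_avg {a : ℝ} (ha : 1 / 2 ≤ a) {x : ℝ} (hx : 0 < x) :
    ∫ s in Ioi (0 : ℝ), wt a s * kerK a (Real.sqrt s * x)
      = Real.Gamma a * Real.pi ^ 2 * Real.exp (-(Real.pi * x) ^ 2) := by
  have ha0 : 0 < a := by linarith
  set y := (Real.pi * x) ^ 2 with hy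
  have hy0 : 0 ≤ y := sq_nonneg _
  have hT : ∀ k : ℕ, ∀ z, pT a z k * Real.Gamma (a + k)
      = Real.Gamma a * ((-z) ^ k / k.factorial) := by
    intro k z
    have := risQ_pos ha0 k
    rw [Gamma_add_nat ha0, pT]
    field_simp
  have hT1 : ∀ k : ℕ, ∀ z, pT a z k * Real.Gamma (a + 1 + k)
      = Real.Gamma a * (a * ((-z) ^ k / k.factorial) + k * ((-z) ^ k / k.factorial)) := by
    intro k z
    have h0 : (a + k : ℝ) ≠ 0 := by positivity
    rw [show a + 1 + (k : ℝ) = a + k + 1 by ring, Real.Gamma_add_one h0, mul_left_comm, hT]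
    ring
  have hn : ∀ k : ℕ, ‖pT a y k‖ = pT a (-y) k := by
    intro k
    have := risQ_pos ha0 k
    rw [pT, pT, norm_div, norm_pow, norm_neg, Real.norm_of_nonneg hy0, neg_neg,
      Real.norm_of_nonneg (by positivity)]
  have s0 : ∀ z, HasSum (fun k => pT a z k * Real.Gamma (a + k)) (Real.Gamma a * Real.exp (-z)) := by
    intro z
    simp only [hT]
    exact (exp_hasSum (-z)).mul_left _
  have s1 : ∀ z, HasSum (fun k => pT a z k * Real.Gamma (a + 1 + k))
      (Real.Gamma a * (a * Real.exp (-z) + (-z) * Real.exp (-z))) := by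
    intro z
    simp only [hT1]
    exact (((exp_hasSum (-z)).mul_left a).add (exp_hasSum' (-z))).mul_left _
  obtain ⟨i0, e0⟩ := pP_average ha ha0 hy0 _ (s0 y) (by simpa only [hn] using (s0 (-y)).summable)
  obtain ⟨i1, e1⟩ := pP_average ha (c := a + 1) (by linarith) hy0 _ (s1 y)
    (by simpa only [hn] using (s1 (-y)).summable)
  have g0 := Real.GammaIntegral_convergent ha0
  have g1 := Real.GammaIntegral_convergent (s := a + 1) (by linarith)
  have e : EqOn (fun s => wt a s * kerK a (Real.sqrt s * x))
      (fun s => (x ^ 2)⁻¹ * ((Real.exp (-s) * s ^ (a + 1 - 1)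
        - Real.exp (-s) * s ^ (a + 1 - 1) * pP a (y * s))
        - a * (Real.exp (-s) * s ^ (a - 1) - Real.exp (-s) * s ^ (a - 1) * pP a (y * s))))
      (Ioi 0) := by
    intro s hs
    have hs : 0 < s := hs
    simp only [wt, kerK]
    rw [show a + 1 - 1 = a - 1 + 1 by ring, Real.rpow_add_one hs.ne',
      show s ^ a = s ^ (a - 1) * s by rw [← Real.rpow_add_one hs.ne']; congr 1; ring,
      show (Real.pi * (Real.sqrt s * x)) ^ 2 = y * s by
        rw [hy]; ring_nf; rw [Real.sq_sqrt hs.le]; ring,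
      show (Real.sqrt s * x) ^ 2 = s * x ^ 2 by rw [mul_pow, Real.sq_sqrt hs.le]]
    field_simp
  have j1 : IntegrableOn (fun s => Real.exp (-s) * s ^ (a + 1 - 1)
      - Real.exp (-s) * s ^ (a + 1 - 1) * pP a (y * s)) (Ioi 0) := g1.sub i1
  have j0 : IntegrableOn (fun s => Real.exp (-s) * s ^ (a - 1)
      - Real.exp (-s) * s ^ (a - 1) * pP a (y * s)) (Ioi 0) := g0.sub i0
  rw [setIntegral_congr_fun measurableSet_Ioi e, integral_const_mul,
    integral_sub j1 (j0.const_mul a), integral_const_mul, integral_sub g1 i1,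
    integral_sub g0 i0, e0, e1, ← Real.Gamma_eq_integral (by linarith),
    ← Real.Gamma_eq_integral (by linarith), Real.Gamma_add_one ha0.ne']
  rw [show (x ^ 2)⁻¹ * (a * Real.Gamma a - Real.Gamma a * (a * Real.exp (-y) + -y * Real.exp (-y))
    - a * (Real.Gamma a - Real.Gamma a * Real.exp (-y))) =
    Real.Gamma a * Real.exp (-y) * (y / x ^ 2) by ring, hy]
  field_simp

theorem kerK_integral {a : ℝ} (ha : 1 / 2 ≤ a) :
    Real.pi ^ (-(3 : ℝ) / 2) * (Real.Gamma (a + 1 / 2) / Real.Gamma a) *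
      ∫ x in Ioi (0 : ℝ), kerK a x = 1 := by
  have ha0 : 0 < a := by linarith
  have h := (avg_integral (b := Real.sqrt) (kerK_measurable ha) (kerK_integrable ha)
    (wt_measurable a) Real.continuous_sqrt.measurable (fun t ht => Real.sqrt_pos.2 ht)
    (wt_int ha).1).2
  rw [setIntegral_congr_fun measurableSet_Ioi (fun x hx => kerK_avg ha hx), (wt_int ha).2,
    integral_const_mul] at h
  have hgauss : ∫ x in Ioi (0 : ℝ), Real.exp (-(Real.pi * x) ^ 2)
      = Real.pi ^ (-(1 : ℝ) / 2) / 2 := by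
    have := integral_gaussian_Ioi (Real.pi ^ 2)
    have e : Real.pi / Real.pi ^ 2 = Real.pi ^ (-1 : ℝ) := by
      rw [Real.rpow_neg_one]; field_simp
    rw [e, Real.sqrt_eq_rpow, ← Real.rpow_mul Real.pi_pos.le] at this
    rw [show (-(1 : ℝ) / 2) = -1 * (1 / 2) by ring, ← this]
    congr 1
    ext x
    congr 1
    ring
  rw [hgauss] at h
  have hG := Real.Gamma_pos_of_pos ha0
  have e1 : Real.pi ^ (-(1 : ℝ) / 2) = Real.pi ^ (-(3 : ℝ) / 2) * Real.pi := by
    rw [← Real.rpow_add_one Real.pi_pos.ne']; norm_num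
  have e2 : Real.pi ^ (-(3 : ℝ) / 2) * Real.pi ^ (-(3 : ℝ) / 2) * Real.pi ^ 3 = 1 := by
    rw [← Real.rpow_natCast, ← Real.rpow_add Real.pi_pos, ← Real.rpow_add Real.pi_pos]; norm_num
  rw [e1] at h
  have h' : Real.Gamma (a + 1 / 2) * ∫ x in Ioi (0 : ℝ), kerK a x
      = Real.Gamma a * Real.pi ^ (-(3 : ℝ) / 2) * Real.pi ^ 3 := by linarith
  calc _ = Real.pi ^ (-(3 : ℝ) / 2) / Real.Gamma a *
        (Real.Gamma (a + 1 / 2) * ∫ x in Ioi (0 : ℝ), kerK a x) := by ring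
    _ = Real.pi ^ (-(3 : ℝ) / 2) * Real.pi ^ (-(3 : ℝ) / 2) * Real.pi ^ 3 := by
        rw [h']; field_simp
    _ = 1 := e2

/-- The Cesàro kernel. -/
def kerI : ℝ → ℝ := (Ioc (0 : ℝ) 1).indicator 1

theorem kerI_integrable : IntegrableOn kerI (Ioi 0) := by
  have : Integrable kerI := by
    unfold kerI
    rw [integrable_indicator_iff measurableSet_Ioc]
    exact integrableOn_const (by simp) (by simp)
  exact this.integrableOn

theorem kerI_integral : ∫ x in Ioi (0 : ℝ), kerI x = 1 := by
  unfold kerI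
  rw [setIntegral_indicator measurableSet_Ioc, inter_eq_right.2 Ioc_subset_Ioi_self]
  simp

theorem kerI_avg {x : ℝ} (hx : 0 < x) :
    ∫ t in Ioi (0 : ℝ), (2 * t * Real.exp (-t ^ 2)) * kerI (t⁻¹ * x) = Real.exp (-x ^ 2) := by
  have e : EqOn (fun t => (2 * t * Real.exp (-t ^ 2)) * kerI (t⁻¹ * x))
      ((Ici x).indicator fun t => 2 * t * Real.exp (-t ^ 2)) (Ioi 0) := by
    intro t ht
    have ht : 0 < t := ht
    have hi : t⁻¹ * x ∈ Ioc (0 : ℝ) 1 ↔ t ∈ Ici x := by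
      rw [mem_Ioc, mem_Ici, inv_mul_le_iff₀ ht, mul_one]
      exact ⟨fun h => h.2, fun h => ⟨by positivity, h⟩⟩
    by_cases hm : t ∈ Ici x
    · simp [kerI, indicator_of_mem hm, indicator_of_mem (hi.2 hm)]
    · simp [kerI, indicator_of_notMem hm, indicator_of_notMem (fun h => hm (hi.1 h))]
  have hsub : Ici x ⊆ Ioi (0 : ℝ) := fun t ht => lt_of_lt_of_le hx ht
  rw [setIntegral_congr_fun measurableSet_Ioi e, setIntegral_indicator measurableSet_Ici,
    inter_eq_right.2 hsub, integral_Ici_eq_integral_Ioi]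
  have hint : Integrable fun t : ℝ => 2 * t * Real.exp (-t ^ 2) := by
    have := (integrable_mul_exp_neg_mul_sq (b := 1) one_pos).const_mul 2
    simpa [mul_assoc] using this
  have := integral_Ioi_of_hasDerivAt_of_tendsto' (a := x) (m := 0)
    (f := fun t : ℝ => -Real.exp (-t ^ 2)) (f' := fun t => 2 * t * Real.exp (-t ^ 2)) ?_
    hint.integrableOn ?_
  · rw [this]; ring
  · intro t _
    have := (((hasDerivAt_id t).pow 2).neg.exp).neg
    refine this.congr_deriv ?_
    simp
    ring
  · have h1 : Tendsto (fun t : ℝ => t ^ 2) atTop atTop := tendsto_pow_atTop (by norm_num)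
    have := (Real.tendsto_exp_neg_atTop_nhds_zero.comp h1).neg
    simpa using this

section
variable {g : ℝ → ℝ} {L C : ℝ}

theorem good_gauss_of_kerI (hg : Measurable g) (hb : ∀ r, |g r| ≤ C) (h : Good g L kerI) :
    Good g L (fun x => Real.exp (-x ^ 2)) := by
  refine (Good.avg (w := fun t => 2 * t * Real.exp (-t ^ 2)) (b := fun t => t⁻¹) hg hb
    (measurable_one.indicator measurableSet_Ioc) h (by fun_prop) (by fun_prop)
    (fun t ht => inv_pos.2 ht) ?_).congr fun x hx => kerI_avg hx
  have := ((integrable_rpow_mul_exp_neg_mul_sq (b := 1) one_pos (s := 2)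
    (by norm_num)).const_mul 2).integrableOn (s := Ioi 0)
  refine this.congr_fun (fun t _ => ?_) measurableSet_Ioi
  simp only [inv_inv, Real.rpow_two, neg_mul, one_mul]
  ring

theorem good_gauss_of_kerK (hg : Measurable g) (hb : ∀ r, |g r| ≤ C) {a : ℝ} (ha : 1 / 2 ≤ a)
    (h : Good g L (kerK a)) : Good g L (fun x => Real.exp (-x ^ 2)) := by
  have h1 : Good g L (fun x => Real.Gamma a * Real.pi ^ 2 * Real.exp (-(Real.pi * x) ^ 2)) :=
    (Good.avg (w := wt a) (b := Real.sqrt) hg hb (kerK_measurable ha) h (wt_measurable a)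
      Real.continuous_sqrt.measurable (fun t ht => Real.sqrt_pos.2 ht)
      (wt_int ha).1).congr fun x hx => kerK_avg ha hx
  have hG : Real.Gamma a ≠ 0 := (Real.Gamma_pos_of_pos (by linarith)).ne'
  refine ((h1.dil (inv_pos.2 Real.pi_pos)).smul (Real.Gamma a * Real.pi ^ 2)⁻¹).congr fun x _ => ?_
  rw [← mul_assoc Real.pi, mul_inv_cancel₀ Real.pi_pos.ne', one_mul]
  field_simp

theorem good_iff (hg : Measurable g) (hb : ∀ r, |g r| ≤ C) {a : ℝ} (ha : 1 / 2 ≤ a) :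
    Good g L kerI ↔ Good g L (kerK a) :=
  ⟨fun h => (good_gauss_of_kerI hg hb h).all hg hb (kerK_integrable ha),
    fun h => (good_gauss_of_kerK hg hb ha h).all hg hb kerI_integrable⟩

end

/-- a Wiener-Tauberian lemma: for `f` with `r² f(r)` nonnegative and bounded, the
Cesàro average of `r² f(r)` converges to `L` iff the kernel averages converge to `L`. -/
theorem wiener_tauberian_average (d : ℕ) (hd : 1 ≤ d) (f : ℝ → ℝ)
    (hmeas : Measurable f)
    (hnonneg : ∀ r : ℝ, 0 < r → 0 ≤ r ^ 2 * f r)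
    (hbdd : ∃ C : ℝ, ∀ r : ℝ, 0 < r → r ^ 2 * f r ≤ C) :
    ∀ L : ℝ,
      Tendsto (fun R : ℝ => R⁻¹ * ∫ r in Set.Ioc (0 : ℝ) R, r ^ 2 * f r) atTop (𝓝 L) ↔
        Tendsto (fun h : ℝ =>
            h⁻¹ * (Real.pi ^ (-(3 : ℝ) / 2) *
              (Real.Gamma (((d : ℝ) + 1) / 2) / Real.Gamma ((d : ℝ) / 2)) *
              ∫ r in Set.Ioi (0 : ℝ),
                (1 - Real.Gamma ((d : ℝ) / 2) *
                    besselJ ((d : ℝ) / 2 - 1) (2 * Real.pi * h * r) /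
                      (Real.pi * h * r) ^ ((d : ℝ) / 2 - 1)) * f r))
          (𝓝[>] (0 : ℝ)) (𝓝 L) := by
  intro L
  obtain ⟨C, hC⟩ := hbdd
  have ha : (1 : ℝ) / 2 ≤ (d : ℝ) / 2 := by
    have : (1 : ℝ) ≤ d := by exact_mod_cast hd
    linarith
  rw [show ((d : ℝ) + 1) / 2 = (d : ℝ) / 2 + 1 / 2 by ring]
  generalize (d : ℝ) / 2 = a at ha ⊢
  set g : ℝ → ℝ := (Ioi (0 : ℝ)).indicator fun r => r ^ 2 * f r with hgdef
  have hg : Measurable g := Measurable.indicator (by fun_prop) measurableSet_Ioi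
  have hgp : ∀ r, 0 < r → g r = r ^ 2 * f r := fun r hr => indicator_of_mem (mem_Ioi.2 hr) _
  have hb : ∀ r, |g r| ≤ C := by
    intro r
    by_cases hr : 0 < r
    · rw [hgp r hr, abs_of_nonneg (hnonneg r hr)]
      exact hC r hr
    · rw [hgdef, indicator_of_notMem (by simpa using hr), abs_zero]
      exact (hnonneg 1 one_pos).trans (hC 1 one_pos)
  have hc := kerK_integral ha
  set c := Real.pi ^ (-(3 : ℝ) / 2) * (Real.Gamma (a + 1 / 2) / Real.Gamma a) with hcdef
  have hc0 : c ≠ 0 := by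
    intro h0
    rw [h0, zero_mul] at hc
    exact zero_ne_one hc
  have hA : Tendsto (fun R : ℝ => R⁻¹ * ∫ r in Set.Ioc (0 : ℝ) R, r ^ 2 * f r) atTop (𝓝 L)
      ↔ Good g L kerI := by
    unfold Good
    rw [kerI_integral, mul_one, and_iff_right kerI_integrable]
    apply tendsto_congr'
    filter_upwards [eventually_gt_atTop 0] with R hR
    have h1 := dil_int (fun r => kerI (R⁻¹ * r) * g r) hR
    simp only [← mul_assoc, inv_mul_cancel₀ hR.ne', one_mul] at h1
    rw [h1]
    congr 1
    have e : EqOn (fun r => kerI (R⁻¹ * r) * g r)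
        ((Ioc (0 : ℝ) R).indicator fun r => r ^ 2 * f r) (Ioi 0) := by
      intro r hr
      have hr : 0 < r := hr
      have hi : R⁻¹ * r ∈ Ioc (0 : ℝ) 1 ↔ r ∈ Ioc (0 : ℝ) R := by
        rw [mem_Ioc, mem_Ioc, inv_mul_le_iff₀ hR, mul_one]
        exact ⟨fun h => ⟨hr, h.2⟩, fun h => ⟨by positivity, h.2⟩⟩
      by_cases hm : r ∈ Ioc (0 : ℝ) R
      · simp [kerI, indicator_of_mem hm, indicator_of_mem (hi.2 hm), hgp r hr]
      · simp [kerI, indicator_of_notMem hm, indicator_of_notMem (fun h => hm (hi.1 h))]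
    rw [setIntegral_congr_fun measurableSet_Ioi e, setIntegral_indicator measurableSet_Ioc,
      inter_eq_right.2 Ioc_subset_Ioi_self]
  have hB : Tendsto (fun R : ℝ => c * ∫ x in Ioi (0 : ℝ), kerK a x * g (R * x)) atTop (𝓝 L)
      ↔ Good g L (kerK a) := by
    unfold Good
    rw [and_iff_right (kerK_integrable ha)]
    constructor
    · intro h
      have := h.const_mul c⁻¹
      rw [show c⁻¹ * L = L * ∫ x in Ioi (0 : ℝ), kerK a x by
        rw [eq_inv_of_mul_eq_one_right hc]; ring] at this
      refine this.congr fun R => ?_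
      rw [← mul_assoc, inv_mul_cancel₀ hc0, one_mul]
    · intro h
      have := h.const_mul c
      rwa [show c * (L * ∫ x in Ioi (0 : ℝ), kerK a x) = L by
        rw [mul_left_comm, hc, mul_one]] at this
  rw [hA, good_iff hg hb ha, ← hB]
  have hD : Tendsto (fun R : ℝ => c * ∫ x in Ioi (0 : ℝ), kerK a x * g (R * x)) atTop (𝓝 L)
      ↔ Tendsto (fun h : ℝ => c * ∫ x in Ioi (0 : ℝ), kerK a x * g (h⁻¹ * x)) (𝓝[>] 0) (𝓝 L) := by
    constructor
    · intro h
      exact h.comp tendsto_inv_nhdsGT_zero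
    · intro h
      have := h.comp tendsto_inv_atTop_nhdsGT_zero
      simpa [Function.comp_def] using this
  rw [hD]
  apply tendsto_congr'
  filter_upwards [self_mem_nhdsWithin] with h hh
  have hh : 0 < h := hh
  have h1 := dil_int (fun x => kerK a x * g (h⁻¹ * x)) hh
  simp only [← mul_assoc, inv_mul_cancel₀ hh.ne', one_mul] at h1
  have e : EqOn (fun r => (1 - Real.Gamma a * besselJ (a - 1) (2 * Real.pi * h * r) /
      (Real.pi * h * r) ^ (a - 1)) * f r) (fun r => h ^ 2 * (kerK a (h * r) * g r)) (Ioi 0) := by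
    intro r hr
    have hr : 0 < r := hr
    have hz : 0 < Real.pi * h * r := by positivity
    simp only
    rw [show 2 * Real.pi * h * r = 2 * (Real.pi * h * r) by ring, besselJ_eq ha hz, hgp r hr, kerK,
      ← mul_assoc Real.pi]
    field_simp
  rw [setIntegral_congr_fun measurableSet_Ioi e, integral_const_mul, h1]
  field_simp

end
end

section
/- Let d ≥ 1 and let L(u) = π^{−3/2} (Γ((d+1)/2)/Γ(d/2)) (1 − Γ(d/2) · J_{d/2−1}(2πu)/(πu)^{d/2−1}) for u > 0. Then for every real τ the integral K̂₂(τ) = ∫₀^∞ u^{−2+2πiτ} L(u) du converges and equals π^{−2πiτ−1/2}/(1 − 2πiτ) · Γ((d+1)/2) Γ(1/2 + πiτ)/Γ((d+1)/2 − πiτ). -/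
open MeasureTheory Metric Set Real Complex Filter
open scoped FourierTransform RealInnerProductSpace Pointwise ENNReal Topology

noncomputable section

/-- The kernel `L(u)` from the proof of the Tauberian lemma. -/
def kernelL (d : ℕ) (u : ℝ) : ℝ :=
  Real.pi ^ (-(3 : ℝ) / 2) * (Real.Gamma (((d : ℝ) + 1) / 2) / Real.Gamma ((d : ℝ) / 2)) *
    (1 - Real.Gamma ((d : ℝ) / 2) * besselJ ((d : ℝ) / 2 - 1) (2 * Real.pi * u) /
      (Real.pi * u) ^ ((d : ℝ) / 2 - 1))

/-- Entire function `∑ (-x)^k / (k! Γ(a+k))`. -/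
def gB (a x : ℝ) : ℝ := ∑' k : ℕ, (-x) ^ k / (Nat.factorial k * Real.Gamma (a + k))

lemma gamma_lower (a : ℝ) (ha : 1 / 2 ≤ a) (k : ℕ) :
    Real.Gamma a / 2 ≤ Real.Gamma (a + k) := by
  have hpos : ∀ b : ℝ, 1 / 2 ≤ b → 0 < Real.Gamma b := fun b hb => Real.Gamma_pos_of_pos (by linarith)
  have h1 : ∀ n : ℕ, Real.Gamma a / 2 ≤ Real.Gamma (a + (n + 1 : ℕ)) := by
    intro n
    induction n with
    | zero =>
      have : Real.Gamma (a + 1) = a * Real.Gamma a := Real.Gamma_add_one (by linarith)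
      simp only [zero_add, Nat.cast_one, this]
      nlinarith [hpos a ha]
    | succ n ih =>
      have h := Real.Gamma_add_one (s := a + (n + 1 : ℕ)) (by positivity)
      have e : a + ((n + 1 + 1 : ℕ) : ℝ) = a + (n + 1 : ℕ) + 1 := by push_cast; ring
      rw [e, h]
      have h2 : (1 : ℝ) ≤ a + (n + 1 : ℕ) := by push_cast; have : (0:ℝ) ≤ n := by positivity
                                                linarith
      nlinarith [hpos (a + (n + 1 : ℕ)) (by linarith)]
  cases k with
  | zero => simp; linarith [hpos a ha]
  | succ n => exact h1 n

lemma gB_term_bound (a : ℝ) (ha : 1 / 2 ≤ a) (x R : ℝ) (hx : |x| ≤ R) (k : ℕ) :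
    ‖(-x) ^ k / (Nat.factorial k * Real.Gamma (a + k))‖ ≤
      2 / Real.Gamma a * (R ^ k / Nat.factorial k) := by
  have hg := gamma_lower a ha k
  have hg0 : 0 < Real.Gamma a := Real.Gamma_pos_of_pos (by linarith)
  have hgk : 0 < Real.Gamma (a + k) := by linarith
  have hf : (0 : ℝ) < Nat.factorial k := by positivity
  rw [norm_div, norm_pow, norm_neg, Real.norm_eq_abs, Real.norm_eq_abs, abs_of_pos (mul_pos hf hgk)]
  have h1 : |x| ^ k ≤ R ^ k := pow_le_pow_left₀ (abs_nonneg _) hx k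
  have h2 : 2 / Real.Gamma a * (R ^ k / Nat.factorial k)
      = R ^ k / (Nat.factorial k * (Real.Gamma a / 2)) := by field_simp
  rw [h2]
  have : 0 ≤ |x| ^ k := by positivity
  gcongr
  linarith

lemma gB_summable (a : ℝ) (ha : 1 / 2 ≤ a) (x : ℝ) :
    Summable fun k : ℕ => (-x) ^ k / (Nat.factorial k * Real.Gamma (a + k)) :=
  Summable.of_norm_bounded ((Real.summable_pow_div_factorial |x|).mul_left (2 / Real.Gamma a))
    (fun k => gB_term_bound a ha x |x| le_rfl k)

lemma gB_hasDerivAt (a : ℝ) (ha : 1 / 2 ≤ a) (x : ℝ) :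
    HasDerivAt (gB a) (-gB (a + 1) x) x := by
  set R := |x| + 1
  -- shifted series
  have key : HasDerivAt (fun z => ∑' k : ℕ, (-z) ^ k / (Nat.factorial k * Real.Gamma (a + k)))
      (∑' k : ℕ, (-(k * (-x) ^ (k - 1))) / (Nat.factorial k * Real.Gamma (a + k))) x := by
    refine hasDerivAt_tsum_of_isPreconnected
      (g := fun (k : ℕ) (z : ℝ) => (-z) ^ k / (Nat.factorial k * Real.Gamma (a + k)))
      (g' := fun (k : ℕ) (z : ℝ) => (-(k * (-z) ^ (k - 1))) / (Nat.factorial k * Real.Gamma (a + k)))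
      (u := fun k : ℕ => 2 / Real.Gamma a * (k * R ^ (k - 1) / Nat.factorial k))
      (t := Metric.ball 0 R) ?_ isOpen_ball
      (convex_ball (0 : ℝ) R).isPreconnected ?_ ?_ (y₀ := x) ?_ (gB_summable a ha x) ?_
    · apply Summable.mul_left
      rw [← summable_nat_add_iff 1]
      refine (Real.summable_pow_div_factorial R).congr fun k => ?_
      rw [Nat.factorial_succ]
      have : (0 : ℝ) < Nat.factorial k := by positivity
      push_cast
      field_simp
    · intro n y _
      have h : HasDerivAt (fun z : ℝ => (-z) ^ n / (Nat.factorial n * Real.Gamma (a + n))) _ y :=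
        ((hasDerivAt_neg y).fun_pow n).div_const (Nat.factorial n * Real.Gamma (a + n))
      exact h.congr_deriv (by simp)
    · intro n y hy
      rw [mem_ball_zero_iff, Real.norm_eq_abs] at hy
      have hg := gamma_lower a ha n
      have hg0 : 0 < Real.Gamma a := Real.Gamma_pos_of_pos (by linarith)
      have hgk : 0 < Real.Gamma (a + n) := by linarith
      have hf : (0 : ℝ) < Nat.factorial n := by positivity
      have h1 : |y| ^ (n - 1) ≤ R ^ (n - 1) := pow_le_pow_left₀ (abs_nonneg _) hy.le _
      have h2 : 2 / Real.Gamma a * (n * R ^ (n - 1) / Nat.factorial n)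
        = n * R ^ (n - 1) / (Nat.factorial n * (Real.Gamma a / 2)) := by field_simp
      rw [h2, norm_div, norm_neg, norm_mul, norm_pow, norm_neg, Real.norm_eq_abs, Real.norm_eq_abs,
        Real.norm_eq_abs, abs_of_pos (mul_pos hf hgk), Nat.abs_cast]
      have : 0 ≤ |y| ^ (n - 1) := by positivity
      have : 0 ≤ R ^ (n - 1) := by positivity
      gcongr
    · simp [R]
    · simp [R]
  refine HasDerivAt.congr_deriv (f := gB a) key ?_
  symm
  have hs : Summable (fun k : ℕ => (-(k * (-x) ^ (k - 1))) / (Nat.factorial k * Real.Gamma (a + k))) := by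
    rw [← summable_nat_add_iff 1]
    refine (gB_summable (a + 1) (by linarith) x).neg.congr fun k => ?_
    rw [Nat.factorial_succ]
    have : (0 : ℝ) < Nat.factorial k := by positivity
    rw [show a + 1 + (k : ℝ) = a + ((k + 1 : ℕ) : ℝ) by push_cast; ring]
    push_cast
    field_simp
  rw [hs.tsum_eq_zero_add, gB, ← tsum_neg]
  simp only [Nat.cast_zero, zero_mul, neg_zero, zero_div, zero_add]
  congr 1; ext k
  rw [Nat.factorial_succ]
  have : (0 : ℝ) < Nat.factorial k := by positivity
  rw [show a + 1 + (k : ℝ) = a + ((k + 1 : ℕ) : ℝ) by push_cast; ring]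
  push_cast
  field_simp

lemma gB_rec (a : ℝ) (ha : 1 / 2 ≤ a) (x : ℝ) :
    gB a x = a * gB (a + 1) x - x * gB (a + 2) x := by
  have h0 := gB_summable (a + 1) (by linarith) x
  have h2 := gB_summable (a + 2) (by linarith) x
  have hs : HasSum (fun k : ℕ => k * ((-x) ^ k / (Nat.factorial k * Real.Gamma (a + 1 + k))))
      (-x * gB (a + 2) x) := by
    rw [← hasSum_nat_add_iff' 1]
    simp only [Finset.range_one, Finset.sum_singleton, Nat.cast_zero, zero_mul, sub_zero]
    refine (h2.hasSum.mul_left (-x)).congr_fun ?_ |> fun h => h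
    intro k
    rw [Nat.factorial_succ]
    have : (0 : ℝ) < Nat.factorial k := by positivity
    rw [show a + 1 + ((k + 1 : ℕ) : ℝ) = a + 2 + k by push_cast; ring]
    push_cast
    field_simp
    ring
  have hs2 := (h0.hasSum.mul_left a).add hs
  have : gB a x = a * gB (a + 1) x + -x * gB (a + 2) x := by
    refine Eq.trans ?_ (HasSum.tsum_eq hs2)
    rw [gB]
    congr 1; ext k
    have hk : a + k ≠ 0 := by positivity
    have hG : Real.Gamma (a + k) ≠ 0 := (Real.Gamma_pos_of_pos (by positivity)).ne'
    rw [show a + 1 + (k : ℝ) = a + k + 1 by ring, Real.Gamma_add_one hk]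
    field_simp
  rw [this]; ring

lemma gB_zero (a : ℝ) : gB a 0 = 1 / Real.Gamma a := by
  rw [gB, tsum_eq_single 0]
  · simp
  · intro k hk; simp [hk]

lemma gB_abs_le (a : ℝ) (ha : 1 / 2 ≤ a) (x : ℝ) (hx : 0 ≤ x) :
    |Real.Gamma a * gB a x| ≤ 1 := by
  have hd : ∀ y, HasDerivAt (fun y => gB a y ^ 2 + y * gB (a + 1) y ^ 2)
      ((1 - 2 * a) * gB (a + 1) y ^ 2) y := by
    intro y
    have h := ((gB_hasDerivAt a ha y).fun_pow 2).fun_add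
      ((hasDerivAt_id' y).fun_mul ((gB_hasDerivAt (a + 1) (by linarith) y).fun_pow 2))
    refine h.congr_deriv ?_
    rw [show a + 1 + 1 = a + 2 by ring]
    have := gB_rec a ha y
    push_cast
    simp only [pow_one, one_mul]
    linear_combination (-2 * gB (a + 1) y) * this
  have hanti : Antitone (fun y => gB a y ^ 2 + y * gB (a + 1) y ^ 2) := by
    apply antitone_of_deriv_nonpos (fun y => (hd y).differentiableAt)
    intro y
    rw [(hd y).deriv]
    nlinarith [sq_nonneg (gB (a + 1) y)]
  have h := hanti hx
  simp only [zero_mul, add_zero, gB_zero] at h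
  have hg0 : 0 < Real.Gamma a := Real.Gamma_pos_of_pos (by linarith)
  have h3 : gB a x ^ 2 ≤ (1 / Real.Gamma a) ^ 2 := by
    nlinarith [mul_nonneg hx (sq_nonneg (gB (a + 1) x))]
  have h4 : |gB a x| ≤ 1 / Real.Gamma a := abs_le_of_sq_le_sq h3 (by positivity)
  rw [abs_mul, abs_of_pos hg0]
  rw [le_div_iff₀ hg0] at h4
  linarith

lemma gB_continuous (a : ℝ) (ha : 1 / 2 ≤ a) : Continuous (gB a) :=
  continuous_iff_continuousAt.2 fun x => (gB_hasDerivAt a ha x).continuousAt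

lemma kernelL_eq (d : ℕ) (u : ℝ) (hu : 0 < u) :
    kernelL d u = Real.pi ^ (-(3 : ℝ) / 2) *
      (Real.Gamma (((d : ℝ) + 1) / 2) / Real.Gamma ((d : ℝ) / 2)) *
      (1 - Real.Gamma ((d : ℝ) / 2) * gB ((d : ℝ) / 2) ((Real.pi * u) ^ 2)) := by
  have hp : 0 < Real.pi * u := by positivity
  rw [kernelL, mul_div_assoc]
  congr 3
  rw [besselJ, ← tsum_div_const, gB]
  congr 1; ext k
  rw [show 2 * Real.pi * u / 2 = Real.pi * u by ring, Real.rpow_add hp,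
    show (d : ℝ) / 2 - 1 + k + 1 = d / 2 + k by ring,
    show (2 * (k : ℝ)) = ((2 * k : ℕ) : ℝ) by push_cast; ring, Real.rpow_natCast, pow_mul,
    neg_pow ((Real.pi * u) ^ 2)]
  have : (Real.pi * u) ^ ((d : ℝ) / 2 - 1) ≠ 0 := (Real.rpow_pos_of_pos hp _).ne'
  field_simp

lemma gauss_term (a b x : ℝ) (ha : 1 / 2 ≤ a) (hx : 0 < x) (k : ℕ) :
    IntegrableOn (fun u : ℝ => u ^ (2 * a - 1) * Real.exp (-x * u ^ 2) *
      ((-(b * u ^ 2)) ^ k / (Nat.factorial k * Real.Gamma (a + k)))) (Ioi 0) ∧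
    ∫ u in Ioi (0 : ℝ), u ^ (2 * a - 1) * Real.exp (-x * u ^ 2) *
      ((-(b * u ^ 2)) ^ k / (Nat.factorial k * Real.Gamma (a + k))) =
      x ^ (-a) / 2 * ((-b / x) ^ k / Nat.factorial k) := by
  have hq : (-1 : ℝ) < 2 * a - 1 + 2 * k := by
    have : (0 : ℝ) ≤ k := by positivity
    linarith
  have e : EqOn (fun u : ℝ => ((-b) ^ k / (Nat.factorial k * Real.Gamma (a + k))) *
      (u ^ (2 * a - 1 + 2 * k) * Real.exp (-x * u ^ (2 : ℝ))))
      (fun u : ℝ => u ^ (2 * a - 1) * Real.exp (-x * u ^ 2) *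
      ((-(b * u ^ 2)) ^ k / (Nat.factorial k * Real.Gamma (a + k)))) (Ioi 0) := by
    intro u hu
    have hu : 0 < u := hu
    simp only
    rw [Real.rpow_two, Real.rpow_add hu,
      show (2 * (k : ℝ)) = ((2 * k : ℕ) : ℝ) by push_cast; ring, Real.rpow_natCast, pow_mul,
      ← neg_mul, mul_pow]
    ring
  constructor
  · exact IntegrableOn.congr_fun
      ((integrableOn_rpow_mul_exp_neg_mul_rpow hq two_pos hx).const_mul _) e measurableSet_Ioi
  · rw [← setIntegral_congr_fun measurableSet_Ioi e, integral_const_mul,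
      integral_rpow_mul_exp_neg_mul_rpow two_pos hq hx]
    have hG : Real.Gamma (a + k) ≠ 0 := (Real.Gamma_pos_of_pos (by positivity)).ne'
    rw [show (2 * a - 1 + 2 * k + 1) / 2 = a + k by ring,
      show -(2 * a - 1 + 2 * k + 1) / 2 = -a + -(k : ℝ) by ring, Real.rpow_add hx,
      Real.rpow_neg hx.le (k : ℝ), Real.rpow_natCast, div_pow]
    field_simp

lemma gauss_integral (a b x : ℝ) (ha : 1 / 2 ≤ a) (hb : 0 < b) (hx : 0 < x) :
    IntegrableOn (fun u : ℝ => u ^ (2 * a - 1) * Real.exp (-x * u ^ 2) *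
      (1 - Real.Gamma a * gB a (b * u ^ 2))) (Ioi 0) ∧
    ∫ u in Ioi (0 : ℝ), u ^ (2 * a - 1) * Real.exp (-x * u ^ 2) *
      (1 - Real.Gamma a * gB a (b * u ^ 2)) =
      Real.Gamma a / 2 * (x ^ (-a) * (1 - Real.exp (-(b / x)))) := by
  have hG : 0 < Real.Gamma a := Real.Gamma_pos_of_pos (by linarith)
  have I0 : IntegrableOn (fun u : ℝ => u ^ (2 * a - 1) * Real.exp (-x * u ^ 2)) (Ioi 0) :=
    integrableOn_rpow_mul_exp_neg_mul_sq hx (by linarith)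
  have V0 : ∫ u in Ioi (0 : ℝ), u ^ (2 * a - 1) * Real.exp (-x * u ^ 2)
      = x ^ (-a) / 2 * Real.Gamma a := by
    have := integral_rpow_mul_exp_neg_mul_rpow (q := 2 * a - 1) two_pos (by linarith) hx
    simp only [Real.rpow_two] at this
    rw [this, show (2 * a - 1 + 1) / 2 = a by ring, show -(2 * a - 1 + 1) / 2 = -a by ring]
    ring
  have hS := hasSum_integral_of_summable_integral_norm (μ := volume.restrict (Ioi (0 : ℝ)))
    (F := fun (k : ℕ) (u : ℝ) => u ^ (2 * a - 1) * Real.exp (-x * u ^ 2) *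
      ((-(b * u ^ 2)) ^ k / (Nat.factorial k * Real.Gamma (a + k))))
    (fun k => (gauss_term a b x ha hx k).1) (by
      have hs : Summable fun k : ℕ => x ^ (-a) / 2 * ((-(-b) / x) ^ k / Nat.factorial k) :=
        (Real.summable_pow_div_factorial _).mul_left _
      refine hs.congr fun k => ?_
      rw [← (gauss_term a (-b) x ha hx k).2]
      refine setIntegral_congr_fun measurableSet_Ioi fun u hu => ?_
      have hu : 0 < u := hu
      have hGk : 0 < Real.Gamma (a + k) := Real.Gamma_pos_of_pos (by positivity)
      have hf : (0 : ℝ) < Nat.factorial k := by positivity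
      simp only [norm_mul, norm_div, norm_pow, norm_neg, Real.norm_eq_abs]
      rw [abs_of_pos (Real.rpow_pos_of_pos hu _), abs_of_pos (Real.exp_pos _), abs_of_pos hf,
        abs_of_pos hGk, abs_of_pos hb, abs_of_pos hu]
      simp)
  simp only [(gauss_term a b x ha hx _).2, tsum_mul_left] at hS
  have hS2 : HasSum (fun k : ℕ => x ^ (-a) / 2 * ((-b / x) ^ k / Nat.factorial k))
      (x ^ (-a) / 2 * Real.exp (-b / x)) := by
    apply HasSum.mul_left
    rw [Real.exp_eq_exp_ℝ]
    exact NormedSpace.expSeries_div_hasSum_exp (-b / x)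
  have V1 := hS.unique hS2
  have I1 : IntegrableOn (fun u : ℝ => u ^ (2 * a - 1) * Real.exp (-x * u ^ 2) *
      (Real.Gamma a * gB a (b * u ^ 2))) (Ioi 0) := by
    refine Integrable.mono' I0 ?_ ?_
    · have := gB_continuous a ha
      apply Measurable.aestronglyMeasurable
      fun_prop
    · filter_upwards [ae_restrict_mem measurableSet_Ioi] with u hu
      have hu : 0 < u := hu
      have h1 := gB_abs_le a ha (b * u ^ 2) (by positivity)
      rw [norm_mul, Real.norm_eq_abs, Real.norm_eq_abs, abs_of_pos (by positivity)]
      exact mul_le_of_le_one_right (by positivity) h1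
  have V2 : ∫ u in Ioi (0 : ℝ), u ^ (2 * a - 1) * Real.exp (-x * u ^ 2) *
      (Real.Gamma a * gB a (b * u ^ 2)) = Real.Gamma a * (x ^ (-a) / 2 * Real.exp (-b / x)) := by
    rw [← V1, ← integral_const_mul]
    congr 1; ext u
    rw [gB]; ring
  constructor
  · refine (I0.sub I1).congr ?_
    filter_upwards with u
    simp only [Pi.sub_apply]; ring
  · have : ∀ u : ℝ, u ^ (2 * a - 1) * Real.exp (-x * u ^ 2) *
      (1 - Real.Gamma a * gB a (b * u ^ 2)) = u ^ (2 * a - 1) * Real.exp (-x * u ^ 2) -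
        u ^ (2 * a - 1) * Real.exp (-x * u ^ 2) * (Real.Gamma a * gB a (b * u ^ 2)) := by
      intro u; ring
    simp only [this]
    rw [integral_sub I0 I1, V0, V2, neg_div]
    ring

lemma mellin_one_sub_exp (b : ℝ) (hb : 0 < b) (p : ℂ) (h1 : -1 < p.re) (h2 : p.re < 0) :
    MellinConvergent (fun y : ℝ => ((1 - Real.exp (-(b * y)) : ℝ) : ℂ)) p ∧
    mellin (fun y : ℝ => ((1 - Real.exp (-(b * y)) : ℝ) : ℂ)) p =
      -(b / p) * ((1 / (b : ℂ)) ^ (p + 1) * Complex.Gamma (p + 1)) := by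
  have hp : p ≠ 0 := by rintro rfl; simp at h2
  have bd1 : ∀ y : ℝ, 0 < y → ‖((1 - Real.exp (-(b * y)) : ℝ) : ℂ)‖ ≤ 1 := by
    intro y hy
    have h : Real.exp (-(b * y)) ≤ 1 := Real.exp_le_one_iff.2 (by nlinarith [mul_pos hb hy])
    rw [Complex.norm_real, Real.norm_eq_abs, abs_of_nonneg (by linarith)]
    linarith [Real.exp_pos (-(b * y))]
  have bd2 : ∀ y : ℝ, 0 < y → ‖((1 - Real.exp (-(b * y)) : ℝ) : ℂ)‖ ≤ b * y := by
    intro y hy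
    have h : Real.exp (-(b * y)) ≤ 1 := Real.exp_le_one_iff.2 (by nlinarith [mul_pos hb hy])
    rw [Complex.norm_real, Real.norm_eq_abs, abs_of_nonneg (by linarith)]
    linarith [Real.add_one_le_exp (-(b * y))]
  have hcont : Continuous (fun y : ℝ => ((1 - Real.exp (-(b * y)) : ℝ) : ℂ)) := by fun_prop
  have hconv : MellinConvergent (fun y : ℝ => ((1 - Real.exp (-(b * y)) : ℝ) : ℂ)) p := by
    refine mellinConvergent_of_isBigO_rpow (a := 0) (b := -1)
      (hcont.locallyIntegrable.locallyIntegrableOn _) ?_ h2 ?_ h1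
    · refine Asymptotics.IsBigO.of_bound 1 ?_
      filter_upwards [eventually_gt_atTop 0] with y hy
      simpa using bd1 y hy
    · refine Asymptotics.IsBigO.of_bound b ?_
      filter_upwards [self_mem_nhdsWithin] with y hy
      have hy : 0 < y := hy
      have := bd2 y hy
      simpa [abs_of_pos hy] using this
  refine ⟨hconv, ?_⟩
  have hnorm : ∀ y : ℝ, 0 < y → ‖(y : ℂ) ^ p‖ = y ^ p.re := fun y hy =>
    Complex.norm_cpow_eq_rpow_re_of_pos hy p
  have hG := Complex.integral_cpow_mul_exp_neg_mul_Ioi (a := p + 1) (r := b)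
    (by simp; linarith) (by simpa using hb)
  have hGi : IntegrableOn (fun y : ℝ => (y : ℂ) ^ p * Complex.exp (-(b * y))) (Ioi 0) := by
    refine Integrable.mono' (integrableOn_rpow_mul_exp_neg_mul_rpow (p := 1) (b := b) h1 one_pos hb) ?_ ?_
    · apply Measurable.aestronglyMeasurable
      fun_prop
    · filter_upwards [ae_restrict_mem measurableSet_Ioi] with y hy
      rw [norm_mul, hnorm y hy, Complex.norm_exp]
      simp
  have hibp := integral_Ioi_mul_deriv_eq_deriv_mul (a := (0 : ℝ)) (a' := (0 : ℂ)) (b' := 0)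
    (u := fun y : ℝ => ((1 - Real.exp (-(b * y)) : ℝ) : ℂ))
    (u' := fun y : ℝ => (b : ℂ) * Complex.exp (-(b * y)))
    (v := fun y : ℝ => (y : ℂ) ^ p / p)
    (v' := fun y : ℝ => (y : ℂ) ^ (p - 1))
    (by
      intro y _
      have h : HasDerivAt (fun y : ℝ => 1 - Real.exp (-(b * y))) (b * Real.exp (-(b * y))) y := by
        have := (((hasDerivAt_id' y).const_mul b).fun_neg.exp).const_sub 1
        exact this.congr_deriv (by ring)
      have h' := h.ofReal_comp
      exact h'.congr_deriv (by push_cast; ring_nf))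
    (by
      intro y hy
      have hy : 0 < y := hy
      have := (hasDerivAt_ofReal_cpow_const' (x := y) hy.ne' (r := p - 1)
        (by intro h; apply hp; linear_combination h))
      simpa using this)
    (by
      refine hconv.congr_fun ?_ measurableSet_Ioi
      intro y _
      simp [mul_comm])
    (by
      refine IntegrableOn.congr_fun (hGi.const_mul (b / p)) ?_ measurableSet_Ioi
      intro y _
      simp only [Pi.mul_apply]; ring)
    (by
      rw [tendsto_zero_iff_norm_tendsto_zero]
      have ht : Tendsto (fun y : ℝ => b / ‖p‖ * y ^ (1 + p.re)) (𝓝[>] 0) (𝓝 0) := by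
        have h := (Real.continuousAt_rpow_const (0 : ℝ) (1 + p.re) (Or.inr (by linarith))).tendsto
        rw [Real.zero_rpow (by linarith)] at h
        simpa using (h.mono_left nhdsWithin_le_nhds).const_mul (b / ‖p‖)
      refine squeeze_zero' (Eventually.of_forall fun _ => norm_nonneg _) ?_ ht
      filter_upwards [self_mem_nhdsWithin] with y hy
      have hy : 0 < y := hy
      simp only [Pi.mul_apply]
      rw [norm_mul, norm_div, hnorm y hy, Real.rpow_add hy, Real.rpow_one]
      have h3 := bd2 y hy
      have h4 : 0 ≤ y ^ p.re / ‖p‖ := by positivity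
      calc _ ≤ (b * y) * (y ^ p.re / ‖p‖) := mul_le_mul_of_nonneg_right h3 h4
        _ = _ := by ring)
    (by
      rw [tendsto_zero_iff_norm_tendsto_zero]
      have ht : Tendsto (fun y : ℝ => y ^ (-(-p.re)) / ‖p‖) atTop (𝓝 0) := by
        simpa using (tendsto_rpow_neg_atTop (y := -p.re) (by linarith)).div_const ‖p‖
      refine squeeze_zero' (Eventually.of_forall fun _ => norm_nonneg _) ?_ ht
      filter_upwards [eventually_gt_atTop 0] with y hy
      simp only [Pi.mul_apply]
      rw [norm_mul, norm_div, hnorm y hy, neg_neg]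
      exact mul_le_of_le_one_left (by positivity) (bd1 y hy))
  have e1 : mellin (fun y : ℝ => ((1 - Real.exp (-(b * y)) : ℝ) : ℂ)) p =
      ∫ y in Ioi (0 : ℝ), ((1 - Real.exp (-(b * y)) : ℝ) : ℂ) * (y : ℂ) ^ (p - 1) := by
    rw [mellin]
    congr 1; ext y; rw [smul_eq_mul, mul_comm]
  rw [e1, hibp, ← hG, ← integral_const_mul, sub_zero, zero_sub, ← integral_neg]
  congr 1; ext y
  rw [add_sub_cancel_right]; ring

lemma core (a b : ℝ) (ha : 1 / 2 ≤ a) (hb : 0 < b) (s : ℂ) (hs : s.re = 0) :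
    IntegrableOn (fun u : ℝ => (u : ℂ) ^ (-2 + s) *
      ((1 - Real.Gamma a * gB a (b * u ^ 2) : ℝ) : ℂ)) (Ioi 0) ∧
    Complex.Gamma (a + 1 / 2 - s / 2) * ∫ u in Ioi (0 : ℝ), (u : ℂ) ^ (-2 + s) *
      ((1 - Real.Gamma a * gB a (b * u ^ 2) : ℝ) : ℂ) =
      (Real.Gamma a / 2 : ℝ) * (2 * b / (1 - s) *
        ((1 / (b : ℂ)) ^ ((1 + s) / 2) * Complex.Gamma ((1 + s) / 2))) := by
  set w : ℂ := a + 1 / 2 - s / 2 with hw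
  have hwre : w.re = a + 1 / 2 := by
    have : (s / 2).re = s.re / 2 := by simp
    simp [hw, this, hs]
  have hwpos : 0 < w.re := by rw [hwre]; linarith
  have hGw : Complex.Gamma w ≠ 0 := Complex.Gamma_ne_zero_of_re_pos hwpos
  set h : ℝ → ℝ := fun u => 1 - Real.Gamma a * gB a (b * u ^ 2) with hh
  have hh0 : ∀ u, 0 ≤ h u := fun u => by
    have := (abs_le.1 (gB_abs_le a ha (b * u ^ 2) (by positivity))).2
    simp only [hh]; linarith
  have hgc := gB_continuous a ha
  have hhm : Measurable h := by simp only [hh]; fun_prop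
  -- the Mellin transform in x
  set p : ℂ := (s - 1) / 2 with hp
  have hpre : p.re = -1 / 2 := by
    have : p.re = (s - 1).re / 2 := by simp [hp]
    rw [this]; simp [hs]
  obtain ⟨hc, hv⟩ := mellin_one_sub_exp b hb p (by rw [hpre]; norm_num) (by rw [hpre]; norm_num)
  have hc' : MellinConvergent (fun x : ℝ => ((1 - Real.exp (-(b * x⁻¹)) : ℝ) : ℂ)) (-p) := by
    have := (MellinConvergent.comp_rpow (f := fun y : ℝ => ((1 - Real.exp (-(b * y)) : ℝ) : ℂ))
      (s := -p) (a := -1) (by norm_num)).2 (by simpa using hc)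
    simpa only [Real.rpow_neg_one] using this
  have hv' := (mellin_comp_inv (fun y : ℝ => ((1 - Real.exp (-(b * y)) : ℝ) : ℂ)) (-p)).trans
    ((neg_neg p).symm ▸ hv)
  let F : ℝ → ℝ → ℂ := fun u x =>
    (x : ℂ) ^ (w - 1) * ((u ^ (2 * a - 1) * Real.exp (-x * u ^ 2) * h u : ℝ) : ℂ)
  have hFm : Measurable (Function.uncurry F) := by
    simp only [F, Function.uncurry_def]
    fun_prop
  have hin : ∀ x : ℝ, 0 < x → ∫ u in Ioi (0 : ℝ), F u x = (Real.Gamma a / 2 : ℝ) *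
      ((x : ℂ) ^ (-p - 1) • ((1 - Real.exp (-(b * x⁻¹)) : ℝ) : ℂ)) := by
    intro x hx
    simp only [F]
    rw [integral_const_mul, integral_complex_ofReal, (gauss_integral a b x ha hb hx).2,
      show -p - 1 = (w - 1) + ((-a : ℝ) : ℂ) by rw [hp, hw]; push_cast; ring,
      Complex.cpow_add _ _ (by exact_mod_cast hx.ne'), ← Complex.ofReal_cpow hx.le, smul_eq_mul,
      div_eq_mul_inv b x]
    push_cast; ring
  have hinn : ∀ x : ℝ, 0 < x → ∫ u in Ioi (0 : ℝ), ‖F u x‖ = ‖∫ u in Ioi (0 : ℝ), F u x‖ := by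
    intro x hx
    have e : EqOn (fun u => ‖F u x‖) (fun u => ‖(x : ℂ) ^ (w - 1)‖ *
        (u ^ (2 * a - 1) * Real.exp (-x * u ^ 2) * h u)) (Ioi 0) := by
      intro u hu
      have hu : 0 < u := hu
      simp only [F]
      rw [norm_mul, Complex.norm_real, Real.norm_eq_abs,
        abs_of_nonneg (mul_nonneg (by positivity) (hh0 u))]
    rw [setIntegral_congr_fun measurableSet_Ioi e, integral_const_mul]
    simp only [F]
    rw [integral_const_mul, integral_complex_ofReal, norm_mul, Complex.norm_real, Real.norm_eq_abs,
      abs_of_nonneg]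
    refine setIntegral_nonneg measurableSet_Ioi fun u hu => ?_
    have hu : 0 < u := hu
    exact mul_nonneg (by positivity) (hh0 u)
  have hI : Integrable (Function.uncurry F)
      ((volume.restrict (Ioi (0 : ℝ))).prod (volume.restrict (Ioi (0 : ℝ)))) := by
    rw [integrable_prod_iff' hFm.aestronglyMeasurable]
    constructor
    · filter_upwards [ae_restrict_mem measurableSet_Ioi] with x hx
      have := (Integrable.ofReal (𝕜 := ℂ) (gauss_integral a b x ha hb hx).1).const_mul
        ((x : ℂ) ^ (w - 1))
      exact this
    · refine (IntegrableOn.congr_fun (Integrable.norm (Integrable.const_mul hc'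
        ((Real.Gamma a / 2 : ℝ) : ℂ))) ?_ measurableSet_Ioi : IntegrableOn _ (Ioi (0 : ℝ)))
      intro x hx
      simp only [Function.uncurry]
      rw [hinn x hx, hin x hx]
  have hout : ∀ u : ℝ, 0 < u → ∫ x in Ioi (0 : ℝ), F u x =
      Complex.Gamma w * ((u : ℂ) ^ (-2 + s) * (h u : ℂ)) := by
    intro u hu
    have hu' : (u : ℂ) ≠ 0 := by exact_mod_cast hu.ne'
    have hG := Complex.integral_cpow_mul_exp_neg_mul_Ioi (a := w) (r := u ^ 2) hwpos
      (by positivity)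
    have e : ∀ x : ℝ, F u x = ((u ^ (2 * a - 1) * h u : ℝ) : ℂ) *
        ((x : ℂ) ^ (w - 1) * Complex.exp (-(((u ^ 2 : ℝ) : ℂ) * x))) := by
      intro x
      simp only [F]
      push_cast
      rw [show -(x : ℂ) * (u : ℂ) ^ 2 = -((u : ℂ) ^ 2 * x) by ring]
      ring
    simp only [e]
    rw [integral_const_mul, hG]
    have e2 : (1 / ((u ^ 2 : ℝ) : ℂ)) ^ w = (u : ℂ) ^ (-2 * w) := by
      rw [show (1 / ((u ^ 2 : ℝ) : ℂ)) = ((u ^ (-2 : ℝ) : ℝ) : ℂ) by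
        rw [Real.rpow_neg hu.le, Real.rpow_two]; push_cast; simp,
        ← Complex.cpow_mul_ofReal_nonneg hu.le]
      congr 1
      push_cast; ring
    rw [e2, Complex.ofReal_mul, Complex.ofReal_cpow hu.le,
      show (-2 + s) = ((2 * a - 1 : ℝ) : ℂ) + -2 * w by rw [hw]; push_cast; ring,
      Complex.cpow_add _ _ hu']
    ring
  constructor
  · have h1 := hI.integral_prod_left
    have h2 : IntegrableOn (fun u : ℝ => (Complex.Gamma w)⁻¹ * ∫ x in Ioi (0 : ℝ), F u x) (Ioi 0) :=
      h1.const_mul _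
    refine h2.congr_fun ?_ measurableSet_Ioi
    intro u hu
    simp only
    rw [hout u hu, inv_mul_cancel_left₀ hGw]
  · have hsw := integral_integral_swap hI
    rw [setIntegral_congr_fun measurableSet_Ioi hout, integral_const_mul,
      setIntegral_congr_fun measurableSet_Ioi hin, integral_const_mul] at hsw
    rw [hsw]
    congr 1
    refine hv'.trans ?_
    have h1s : 1 - s ≠ 0 := by
      intro h0
      have := congrArg Complex.re h0
      simp [hs] at this
    have hp0 : s - 1 ≠ 0 := by
      intro h0; apply h1s; linear_combination -h0
    rw [neg_neg, show p + 1 = (1 + s) / 2 by rw [hp]; ring]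
    congr 1
    rw [hp]
    field_simp
    ring

/-- the Mellin-type integral `K̂₂(τ) = ∫₀^∞ u^{-2+2πiτ} L(u) du` converges and
has the stated Gamma-function value. -/
theorem K2hat_value (d : ℕ) (hd : 1 ≤ d) (τ : ℝ) :
    IntegrableOn
      (fun u : ℝ => (u : ℂ) ^ ((-2 : ℂ) + 2 * Real.pi * Complex.I * τ) * (kernelL d u : ℂ))
      (Set.Ioi (0 : ℝ)) ∧
    ∫ u in Set.Ioi (0 : ℝ),
        (u : ℂ) ^ ((-2 : ℂ) + 2 * Real.pi * Complex.I * τ) * (kernelL d u : ℂ) =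
      (Real.pi : ℂ) ^ (-(2 * Real.pi * Complex.I * τ) - 1 / 2) / (1 - 2 * Real.pi * Complex.I * τ) *
        (Complex.Gamma (((d : ℂ) + 1) / 2) * Complex.Gamma (1 / 2 + Real.pi * Complex.I * τ) /
          Complex.Gamma (((d : ℂ) + 1) / 2 - Real.pi * Complex.I * τ)) := by
  have hd' : (1 : ℝ) ≤ d := by exact_mod_cast hd
  set s : ℂ := 2 * Real.pi * Complex.I * τ with hs
  have hsre : s.re = 0 := by simp [hs]
  obtain ⟨h1, h2⟩ := core ((d : ℝ) / 2) (Real.pi ^ 2) (by linarith) (by positivity) s hsre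
  set C : ℝ := Real.pi ^ (-(3 : ℝ) / 2) * (Real.Gamma (((d : ℝ) + 1) / 2) / Real.Gamma ((d : ℝ) / 2))
    with hC
  have e : EqOn (fun u : ℝ => (C : ℂ) * ((u : ℂ) ^ (-2 + s) *
      ((1 - Real.Gamma ((d : ℝ) / 2) * gB ((d : ℝ) / 2) (Real.pi ^ 2 * u ^ 2) : ℝ) : ℂ)))
      (fun u : ℝ => (u : ℂ) ^ (-2 + s) * (kernelL d u : ℂ)) (Ioi 0) := by
    intro u hu
    simp only
    rw [kernelL_eq d u hu, ← hC, mul_pow]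
    push_cast
    ring
  refine ⟨IntegrableOn.congr_fun (h1.const_mul _) e measurableSet_Ioi, ?_⟩
  rw [← setIntegral_congr_fun measurableSet_Ioi e, integral_const_mul]
  have hw : (((d : ℝ) / 2 : ℝ) : ℂ) + 1 / 2 - s / 2 = ((d : ℂ) + 1) / 2 - Real.pi * Complex.I * τ := by
    rw [hs]; push_cast; ring
  rw [hw] at h2
  have hGw : Complex.Gamma (((d : ℂ) + 1) / 2 - Real.pi * Complex.I * τ) ≠ 0 := by
    apply Complex.Gamma_ne_zero_of_re_pos
    rw [← hw]
    have : (s / 2).re = s.re / 2 := by simp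
    simp [this, hsre]
    positivity
  rw [show (1 : ℂ) / 2 + Real.pi * Complex.I * τ = (1 + s) / 2 by rw [hs]; ring]
  have hpi : (Real.pi : ℂ) ≠ 0 := by exact_mod_cast Real.pi_ne_zero
  have hG0 : (Real.Gamma ((d : ℝ) / 2) : ℂ) ≠ 0 := by
    exact_mod_cast (Real.Gamma_pos_of_pos (by linarith)).ne'
  have h1s : 1 - s ≠ 0 := by
    intro h0
    have := congrArg Complex.re h0
    simp [hsre] at this
  have e2 : (1 / ((Real.pi ^ 2 : ℝ) : ℂ)) ^ ((1 + s) / 2) = (Real.pi : ℂ) ^ (-1 - s) := by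
    rw [show (1 / ((Real.pi ^ 2 : ℝ) : ℂ)) = ((Real.pi ^ (-2 : ℝ) : ℝ) : ℂ) by
      rw [Real.rpow_neg Real.pi_pos.le, Real.rpow_two]; push_cast; simp,
      ← Complex.cpow_mul_ofReal_nonneg Real.pi_pos.le]
    congr 1
    push_cast; ring
  have e3 : (Real.pi : ℂ) ^ (-s - 1 / 2) =
      ((Real.pi ^ (-(3 : ℝ) / 2) : ℝ) : ℂ) * Real.pi ^ 2 * (Real.pi : ℂ) ^ (-1 - s) := by
    rw [Complex.ofReal_cpow Real.pi_pos.le, ← Complex.cpow_ofNat, ← Complex.cpow_add _ _ hpi,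
      ← Complex.cpow_add _ _ hpi]
    congr 1
    push_cast; ring
  have e4 : Complex.Gamma (((d : ℂ) + 1) / 2) = (Real.Gamma (((d : ℝ) + 1) / 2) : ℂ) := by
    rw [← Complex.Gamma_ofReal]; push_cast; rfl
  rw [e2] at h2
  rw [e3, e4, hC]
  have h3 := (eq_div_iff hGw).2 ((mul_comm _ _).trans h2)
  rw [h3]
  push_cast
  field_simp

end
end

section
/- Let d ≥ 1 and τ ∈ ℝ. Then the function u ↦ u^{−1+2πiτ} ∫₀^u (πs)^{1−d/2} J_{d/2}(2πs) ds tends to 0 both as u → 0+ and as u → ∞. -/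
open MeasureTheory Metric Set Real Complex Filter
open scoped FourierTransform RealInnerProductSpace Pointwise ENNReal Topology

noncomputable section

/-- Exponential-type series with coefficients `c k`. -/
def expSer (c : ℕ → ℝ) (t : ℝ) : ℝ := ∑' k : ℕ, c k * t ^ k / (Nat.factorial k : ℝ)

lemma expSer_summable (c : ℕ → ℝ) (C : ℝ) (hc : ∀ k, |c k| ≤ C) (t : ℝ) :
    Summable fun k : ℕ => c k * t ^ k / (Nat.factorial k : ℝ) := by
  refine Summable.of_norm_bounded (g := fun k : ℕ => C * (|t| ^ k / (Nat.factorial k : ℝ)))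
    ((Real.summable_pow_div_factorial |t|).mul_left C) fun k => ?_
  rw [Real.norm_eq_abs, abs_div, abs_mul, abs_pow, Nat.abs_cast, mul_div_assoc]
  exact mul_le_mul_of_nonneg_right (hc k) (by positivity)

lemma expSer_hasDerivAt (c : ℕ → ℝ) (C : ℝ) (hc : ∀ k, |c k| ≤ C) (t : ℝ) :
    HasDerivAt (expSer c) (expSer (fun k => c (k + 1)) t) t := by
  set R := |t| + 1 with hR
  have hR0 : 0 ≤ R := by positivity
  have hC0 : 0 ≤ C := (abs_nonneg _).trans (hc 0)
  have hsucc : ∀ (k : ℕ) (y : ℝ), c (k + 1) * (((k + 1 : ℕ) : ℝ) * y ^ (k + 1 - 1)) /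
      (Nat.factorial (k + 1) : ℝ) = c (k + 1) * y ^ k / (Nat.factorial k : ℝ) := by
    intro k y
    rw [Nat.factorial_succ, Nat.add_sub_cancel]
    push_cast
    have h1 : (Nat.factorial k : ℝ) ≠ 0 := by positivity
    have h2 : (k : ℝ) + 1 ≠ 0 := by positivity
    field_simp
  have hu : Summable fun k : ℕ => C * ((k : ℝ) * R ^ (k - 1)) / (Nat.factorial k : ℝ) := by
    rw [← summable_nat_add_iff 1]
    refine ((Real.summable_pow_div_factorial R).mul_left C).congr fun k => ?_
    rw [Nat.factorial_succ, Nat.add_sub_cancel]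
    push_cast
    have h1 : (Nat.factorial k : ℝ) ≠ 0 := by positivity
    have h2 : (k : ℝ) + 1 ≠ 0 := by positivity
    field_simp
  have key := hasDerivAt_tsum_of_isPreconnected (𝕜 := ℝ) (F := ℝ)
    (g := fun (k : ℕ) (y : ℝ) => c k * y ^ k / (Nat.factorial k : ℝ))
    (g' := fun (k : ℕ) (y : ℝ) => c k * ((k : ℝ) * y ^ (k - 1)) / (Nat.factorial k : ℝ))
    (t := Metric.ball (0 : ℝ) R) (y₀ := t) (y := t) hu Metric.isOpen_ball
    (convex_ball (0 : ℝ) R).isPreconnected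
    (fun k y _ => ((hasDerivAt_pow k y).const_mul (c k)).div_const _)
    (fun k y hy => ?_) (by simp [hR]) (expSer_summable c C hc t) (by simp [hR])
  · have h0 : (∑' k : ℕ, c k * ((k : ℝ) * t ^ (k - 1)) / (Nat.factorial k : ℝ))
        = expSer (fun k => c (k + 1)) t := by
      rw [Summable.tsum_eq_zero_add]
      · simp only [hsucc]
        simp [expSer]
      · rw [← summable_nat_add_iff 1]
        simp only [hsucc]
        exact expSer_summable (fun k => c (k + 1)) C (fun k => hc _) t
    rw [h0] at key
    exact key
  · have hy' : |y| ≤ R := by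
      simpa using (mem_ball_zero_iff.1 hy).le
    rw [Real.norm_eq_abs, abs_div, abs_mul, abs_mul, abs_pow, Nat.abs_cast, Nat.abs_cast]
    gcongr
    exact hc k

/-- The reduced Bessel function. -/
def redB (ν t : ℝ) : ℝ := expSer (fun k => (-1 : ℝ) ^ k / Real.Gamma (ν + k)) t

lemma redB_bdd (ν : ℝ) (hν : 0 < ν) :
    ∃ C, ∀ k : ℕ, |(-1 : ℝ) ^ k / Real.Gamma (ν + k)| ≤ C := by
  have hG : ∀ k : ℕ, 0 < Real.Gamma (ν + k) := fun k => Real.Gamma_pos_of_pos (by positivity)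
  have h : ∀ k : ℕ, Real.Gamma (ν + 1) ≤ Real.Gamma (ν + (k + 1 : ℕ)) := by
    intro k
    induction k with
    | zero => simp
    | succ k ih =>
      refine ih.trans ?_
      have e : ν + ((k + 1 + 1 : ℕ) : ℝ) = (ν + ((k + 1 : ℕ) : ℝ)) + 1 := by push_cast; ring
      rw [e, Real.Gamma_add_one (by positivity)]
      have : (1 : ℝ) ≤ ν + ((k + 1 : ℕ) : ℝ) := by
        push_cast
        have : (0 : ℝ) ≤ k := by positivity
        linarith
      nlinarith [hG (k + 1)]
  refine ⟨max (1 / Real.Gamma ν) (1 / Real.Gamma (ν + 1)), fun k => ?_⟩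
  rw [abs_div, abs_pow, abs_neg, abs_one, one_pow, abs_of_pos (hG k)]
  cases k with
  | zero => simp
  | succ k =>
    exact le_max_of_le_right
      (one_div_le_one_div_of_le (Real.Gamma_pos_of_pos (by positivity)) (h k))

lemma redB_hasDerivAt (ν : ℝ) (hν : 0 < ν) (t : ℝ) :
    HasDerivAt (redB ν) (-redB (ν + 1) t) t := by
  obtain ⟨C, hC⟩ := redB_bdd ν hν
  have h := expSer_hasDerivAt _ C hC t
  have e : expSer (fun k => (-1 : ℝ) ^ (k + 1) / Real.Gamma (ν + (k + 1 : ℕ))) t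
      = -redB (ν + 1) t := by
    unfold redB expSer
    rw [← tsum_neg]
    refine tsum_congr fun k => ?_
    have : ν + ((k + 1 : ℕ) : ℝ) = ν + 1 + k := by push_cast; ring
    beta_reduce
    rw [this]
    ring
  rw [e] at h
  exact h

lemma redB_rec (ν : ℝ) (hν : 0 < ν) (t : ℝ) :
    redB ν t = ν * redB (ν + 1) t - t * redB (ν + 2) t := by
  obtain ⟨C1, hC1⟩ := redB_bdd (ν + 1) (by positivity)
  obtain ⟨C2, hC2⟩ := redB_bdd (ν + 2) (by positivity)
  obtain ⟨C0, hC0⟩ := redB_bdd ν hν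
  have s1 := expSer_summable _ C1 hC1 t
  have s2 := expSer_summable _ C2 hC2 t
  have s0 := expSer_summable _ C0 hC0 t
  have hd : redB ν t - ν * redB (ν + 1) t = ∑' k : ℕ,
      ((-1 : ℝ) ^ k / Real.Gamma (ν + k) * t ^ k / (Nat.factorial k : ℝ)
        - ν * ((-1 : ℝ) ^ k / Real.Gamma (ν + 1 + k) * t ^ k / (Nat.factorial k : ℝ))) := by
    unfold redB expSer
    rw [← tsum_mul_left, s0.tsum_sub (s1.mul_left ν)]
  have hs := s0.sub (s1.mul_left ν)
  rw [hs.tsum_eq_zero_add] at hd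
  have h0 : ((-1 : ℝ) ^ 0 / Real.Gamma (ν + (0 : ℕ)) * t ^ 0 / (Nat.factorial 0 : ℝ)
        - ν * ((-1 : ℝ) ^ 0 / Real.Gamma (ν + 1 + (0 : ℕ)) * t ^ 0 / (Nat.factorial 0 : ℝ))) = 0 := by
    have hG := Real.Gamma_pos_of_pos hν
    simp only [Nat.cast_zero, add_zero, pow_zero, Nat.factorial_zero, Nat.cast_one]
    rw [Real.Gamma_add_one hν.ne']
    field_simp
    ring
  rw [h0, zero_add] at hd
  have h1 : ∀ k : ℕ, ((-1 : ℝ) ^ (k + 1) / Real.Gamma (ν + (k + 1 : ℕ)) * t ^ (k + 1)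
        / (Nat.factorial (k + 1) : ℝ)
        - ν * ((-1 : ℝ) ^ (k + 1) / Real.Gamma (ν + 1 + (k + 1 : ℕ)) * t ^ (k + 1)
        / (Nat.factorial (k + 1) : ℝ)))
      = -t * ((-1 : ℝ) ^ k / Real.Gamma (ν + 2 + k) * t ^ k / (Nat.factorial k : ℝ)) := by
    intro k
    have hp : 0 < ν + 1 + k := by positivity
    have hG := Real.Gamma_pos_of_pos hp
    have e1 : ν + ((k + 1 : ℕ) : ℝ) = ν + 1 + k := by push_cast; ring
    have e2 : ν + 1 + ((k + 1 : ℕ) : ℝ) = ν + 1 + k + 1 := by push_cast; ring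
    have e3 : ν + 2 + (k : ℝ) = ν + 1 + k + 1 := by ring
    rw [e1, e2, e3, Real.Gamma_add_one hp.ne', Nat.factorial_succ]
    push_cast
    have hf : (Nat.factorial k : ℝ) ≠ 0 := by positivity
    have hk : (k : ℝ) + 1 ≠ 0 := by positivity
    field_simp
    ring
  simp only [h1, tsum_mul_left] at hd
  have : redB (ν + 2) t = ∑' k : ℕ,
    ((-1 : ℝ) ^ k / Real.Gamma (ν + 2 + k) * t ^ k / (Nat.factorial k : ℝ)) := rfl
  rw [← this] at hd
  linarith

lemma redB_bounded (ν : ℝ) (hν : 1 / 2 ≤ ν) (t : ℝ) (ht : 0 ≤ t) :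
    |redB ν t| ≤ |redB ν 0| := by
  have hν0 : 0 < ν := by linarith
  have hder : ∀ x, HasDerivAt (fun t => t * redB (ν + 1) t ^ 2 + redB ν t ^ 2)
      ((1 - 2 * ν) * redB (ν + 1) x ^ 2) x := by
    intro x
    have a := redB_hasDerivAt ν hν0 x
    have b := redB_hasDerivAt (ν + 1) (by positivity) x
    have h := ((hasDerivAt_id x).mul (b.pow 2)).add (a.pow 2)
    have e : ν + 1 + 1 = ν + 2 := by ring
    refine h.congr_deriv ?_
    rw [e]
    simp only [id, Pi.pow_apply]
    rw [redB_rec ν hν0 x]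
    norm_num
    ring
  have hanti : Antitone (fun t => t * redB (ν + 1) t ^ 2 + redB ν t ^ 2) :=
    antitone_of_hasDerivAt_nonpos hder fun x =>
      mul_nonpos_of_nonpos_of_nonneg (by linarith) (sq_nonneg _)
  have h := hanti ht
  simp only [zero_mul, zero_add] at h
  refine sq_le_sq.1 ?_
  have : 0 ≤ t * redB (ν + 1) t ^ 2 := by positivity
  linarith

lemma integrand_eq (ν s : ℝ) (hs : 0 < s) :
    (Real.pi * s) ^ (1 - ν) * besselJ ν (2 * Real.pi * s)
      = (Real.pi * s) * redB (ν + 1) ((Real.pi * s) ^ 2) := by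
  have hx : 0 < Real.pi * s := by positivity
  have e : 2 * Real.pi * s / 2 = Real.pi * s := by ring
  unfold besselJ redB expSer
  rw [e, ← tsum_mul_left, ← tsum_mul_left]
  refine tsum_congr fun k => ?_
  have h1 : (Real.pi * s) ^ (1 - ν) * (Real.pi * s) ^ (ν + 2 * (k : ℝ))
      = (Real.pi * s) * ((Real.pi * s) ^ 2) ^ k := by
    rw [← Real.rpow_add hx, ← pow_mul, ← pow_succ', ← Real.rpow_natCast]
    congr 1
    push_cast
    ring
  have e2 : ν + 1 + (k : ℝ) = ν + k + 1 := by ring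
  beta_reduce
  rw [e2]
  calc _ = (-1 : ℝ) ^ k * ((Real.pi * s) ^ (1 - ν) * (Real.pi * s) ^ (ν + 2 * (k : ℝ)))
        / (Nat.factorial k * Real.Gamma (ν + k + 1)) := by ring
    _ = _ := by rw [h1, div_mul_eq_mul_div, div_div, mul_comm (Real.Gamma _)]; ring

/-- The primitive. -/
def primB (ν u : ℝ) : ℝ := (redB ν 0 - redB ν ((Real.pi * u) ^ 2)) / (2 * Real.pi)

lemma primB_hasDerivAt (ν : ℝ) (hν : 0 < ν) (u : ℝ) :
    HasDerivAt (primB ν) ((Real.pi * u) * redB (ν + 1) ((Real.pi * u) ^ 2)) u := by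
  have h1 : HasDerivAt (fun u : ℝ => (Real.pi * u) ^ 2) (2 * (Real.pi * u) * Real.pi) u := by
    have := ((hasDerivAt_id u).const_mul Real.pi).pow 2
    refine this.congr_deriv ?_
    simp
  have h2 := (redB_hasDerivAt ν hν ((Real.pi * u) ^ 2)).comp u h1
  have h3 := ((h2.const_sub (redB ν 0)).div_const (2 * Real.pi))
  refine h3.congr_deriv ?_
  have := Real.pi_pos
  field_simp

lemma integral_eq_primB (ν : ℝ) (hν : 0 < ν) (u : ℝ) (hu : 0 < u) :
    (∫ s in Set.Ioc (0 : ℝ) u, (Real.pi * s) ^ (1 - ν) * besselJ ν (2 * Real.pi * s))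
      = primB ν u := by
  rw [setIntegral_congr_fun measurableSet_Ioc (fun s hs => integrand_eq ν s hs.1),
    ← intervalIntegral.integral_of_le hu.le]
  have hc : Continuous (redB (ν + 1)) := continuous_iff_continuousAt.2 fun x =>
    (redB_hasDerivAt (ν + 1) (by positivity) x).continuousAt
  rw [intervalIntegral.integral_eq_sub_of_hasDerivAt
    (fun x _ => primB_hasDerivAt ν hν x) (by
      apply Continuous.intervalIntegrable
      fun_prop)]
  simp [primB]

lemma norm_boundary (ν : ℝ) (hν : 0 < ν) (τ u : ℝ) (hu : 0 < u) :
    ‖(u : ℂ) ^ ((-1 : ℂ) + 2 * Real.pi * Complex.I * τ) *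
      ((∫ s in Set.Ioc (0 : ℝ) u,
        (Real.pi * s) ^ (1 - ν) * besselJ ν (2 * Real.pi * s) : ℝ) : ℂ)‖
      = |u⁻¹ * primB ν u| := by
  rw [integral_eq_primB ν hν u hu, norm_mul, Complex.norm_cpow_eq_rpow_re_of_pos hu,
    Complex.norm_real, abs_mul, abs_of_pos (inv_pos.2 hu), Real.norm_eq_abs]
  congr 1
  simp [Real.rpow_neg_one]

/-- the boundary term `u^{-1+2πiτ} ∫₀^u (πs)^{1-d/2} J_{d/2}(2πs) ds` vanishes
in the limits `u → 0+` and `u → ∞`. -/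
theorem boundary_term_tendsto_zero (d : ℕ) (hd : 1 ≤ d) (τ : ℝ) :
    Tendsto (fun u : ℝ =>
        (u : ℂ) ^ ((-1 : ℂ) + 2 * Real.pi * Complex.I * τ) *
          ((∫ s in Set.Ioc (0 : ℝ) u,
            (Real.pi * s) ^ (1 - (d : ℝ) / 2) * besselJ ((d : ℝ) / 2) (2 * Real.pi * s) : ℝ) : ℂ))
      (𝓝[>] (0 : ℝ)) (𝓝 0) ∧
    Tendsto (fun u : ℝ =>
        (u : ℂ) ^ ((-1 : ℂ) + 2 * Real.pi * Complex.I * τ) *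
          ((∫ s in Set.Ioc (0 : ℝ) u,
            (Real.pi * s) ^ (1 - (d : ℝ) / 2) * besselJ ((d : ℝ) / 2) (2 * Real.pi * s) : ℝ) : ℂ))
      atTop (𝓝 0) := by
  have hν : (1 : ℝ) / 2 ≤ (d : ℝ) / 2 := by
    have : (1 : ℝ) ≤ d := by exact_mod_cast hd
    linarith
  have hν0 : 0 < (d : ℝ) / 2 := by linarith
  constructor
  · rw [tendsto_zero_iff_norm_tendsto_zero]
    have h := (primB_hasDerivAt ((d : ℝ) / 2) hν0 0).tendsto_slope_zero_right
    have h2 := h.abs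
    simp only [mul_zero, zero_mul, abs_zero] at h2
    refine h2.congr' ?_
    filter_upwards [self_mem_nhdsWithin] with u hu
    rw [norm_boundary _ hν0 τ u hu]
    simp [primB]
  · rw [tendsto_zero_iff_norm_tendsto_zero]
    set M := 2 * |redB ((d : ℝ) / 2) 0| / (2 * Real.pi) with hM
    have hb : ∀ u, |primB ((d : ℝ) / 2) u| ≤ M := by
      intro u
      unfold primB
      rw [abs_div, abs_of_pos (by positivity : 0 < 2 * Real.pi), hM]
      gcongr
      have h1 := redB_bounded ((d : ℝ) / 2) hν ((Real.pi * u) ^ 2) (by positivity)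
      have h2 := abs_sub (redB ((d : ℝ) / 2) 0) (redB ((d : ℝ) / 2) ((Real.pi * u) ^ 2))
      linarith
    have hlim : Tendsto (fun u : ℝ => u⁻¹ * M) atTop (𝓝 0) := by
      simpa using tendsto_inv_atTop_zero.mul_const M
    refine squeeze_zero' (Eventually.of_forall fun u => norm_nonneg _) ?_ hlim
    filter_upwards [eventually_gt_atTop 0] with u hu
    rw [norm_boundary _ hν0 τ u hu, abs_mul, abs_of_pos (inv_pos.2 hu)]
    exact mul_le_mul_of_nonneg_left (hb u) (inv_pos.2 hu).le

end
end

section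
/- Let D ⊂ ℝ^d be a bounded measurable set and h > 0. Then ∫₀^∞ (d·κ_d − 2π (hρ)^{1−d/2} J_{d/2−1}(2πhρ)) ρ^{d−1} γ̄̂_D(ρ) dρ = γ̄_D(0) − γ̄_D(h), where γ̄_D is the isotropic covariogram of D and γ̄̂_D the rotational quadratic average of the Fourier transform of I_D. -/
open MeasureTheory Metric Set Real Complex Filter
open scoped FourierTransform RealInnerProductSpace Pointwise ENNReal Topology

noncomputable section

lemma aux_finrank (d : ℕ) : Module.finrank ℝ (E d) = d := by simp

lemma aux_nontrivial {d : ℕ} (hd : 1 ≤ d) : Nontrivial (E d) := by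
  apply Module.nontrivial_of_finrank_pos (R := ℝ)
  rw [aux_finrank]; omega

lemma aux_polar {d : ℕ} (hd : 1 ≤ d) (G : E d → ℝ) (hG : Integrable G) :
    ∫ x, G x = ∫ ρ in Ioi (0 : ℝ), ρ ^ (d - 1) *
      ∫ θ : sphere (0 : E d) 1, G (ρ • (θ : E d)) ∂((volume : Measure (E d)).toSphere) := by
  have := aux_nontrivial hd
  set μ : Measure (E d) := volume
  have hmp := μ.measurePreserving_homeomorphUnitSphereProd
  have he : MeasurableEmbedding (homeomorphUnitSphereProd (E d)) :=
    Homeomorph.measurableEmbedding _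
  let H : sphere (0 : E d) 1 × Ioi (0 : ℝ) → ℝ := fun p => G ((p.2 : ℝ) • (p.1 : E d))
  have hH : ∀ x : ({(0)}ᶜ : Set (E d)), H (homeomorphUnitSphereProd (E d) x) = G x := by
    intro x
    have hx : ‖(x : E d)‖ ≠ 0 := norm_ne_zero_iff.2 x.2
    simp [H, smul_smul, hx]
  have hint : Integrable H (μ.toSphere.prod (.volumeIoiPow (Module.finrank ℝ (E d) - 1))) := by
    rw [← hmp.integrable_comp_emb he]
    have : Integrable (fun x : ({(0)}ᶜ : Set (E d)) => G x) (μ.comap (↑)) := by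
      have := (integrableOn_iff_comap_subtypeVal (μ := μ) (f := G)
        (measurableSet_singleton (0 : E d)).compl).1 hG.integrableOn
      exact this
    refine this.congr (Eventually.of_forall fun x => (hH x).symm)
  calc
    ∫ x, G x ∂μ = ∫ x : ({(0)}ᶜ : Set (E d)), G x ∂(μ.comap (↑)) := by
      rw [integral_subtype_comap (measurableSet_singleton _).compl G,
        restrict_compl_singleton]
    _ = ∫ x, H x ∂μ.toSphere.prod (.volumeIoiPow (Module.finrank ℝ (E d) - 1)) := by
      rw [← hmp.integral_comp he]
      exact integral_congr_ae (Eventually.of_forall fun x => (hH x).symm)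
    _ = ∫ r : Ioi (0 : ℝ), ∫ θ, H (θ, r) ∂μ.toSphere
          ∂(.volumeIoiPow (Module.finrank ℝ (E d) - 1)) := integral_prod_symm _ hint
    _ = _ := by
      simp only [Measure.volumeIoiPow, ENNReal.ofReal, H]
      rw [integral_withDensity_eq_integral_smul,
        integral_subtype_comap measurableSet_Ioi fun a : ℝ ↦
          Real.toNNReal (a ^ (Module.finrank ℝ (E d) - 1)) • ∫ θ : sphere (0 : E d) 1,
            G (a • (θ : E d)) ∂μ.toSphere,
        setIntegral_congr_fun measurableSet_Ioi fun x hx ↦ ?_]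
      · simp only [aux_finrank]
        rw [NNReal.smul_def, Real.coe_toNNReal _ (pow_nonneg hx.out.le _), smul_eq_mul]
      · exact (measurable_subtype_coe.pow_const _).real_toNNReal

lemma aux_unitBallVol {d : ℕ} (hd : 1 ≤ d) :
    (d : ℝ) * unitBallVol d = ((volume : Measure (E d)).toSphere).real univ := by
  have := aux_nontrivial hd
  rw [Measure.toSphere_real_apply_univ, aux_finrank]
  congr 1
  rw [measureReal_def, InnerProductSpace.volume_ball]
  have : 0 < Real.Gamma ((d : ℝ) / 2 + 1) := Real.Gamma_pos_of_pos (by positivity)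
  simp only [unitBallVol, aux_finrank, ENNReal.ofReal_one, one_pow, one_mul]
  rw [ENNReal.toReal_ofReal (by positivity), Real.sqrt_eq_rpow, ← Real.rpow_natCast,
    ← Real.rpow_mul Real.pi_pos.le]
  congr 2
  ring

lemma aux_surf_pos {d : ℕ} (hd : 1 ≤ d) : 0 < (d : ℝ) * unitBallVol d := by
  have : 0 < Real.Gamma ((d : ℝ) / 2 + 1) := Real.Gamma_pos_of_pos (by positivity)
  have : (0 : ℝ) < d := by exact_mod_cast hd
  unfold unitBallVol
  positivity

lemma aux_surf_eq {d : ℕ} (hd : 1 ≤ d) :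
    (d : ℝ) * unitBallVol d = 2 * Real.pi ^ ((d : ℝ) / 2) / Real.Gamma ((d : ℝ) / 2) := by
  have h0 : (0 : ℝ) < d := by exact_mod_cast hd
  unfold unitBallVol
  rw [Real.Gamma_add_one (by positivity)]
  have : 0 < Real.Gamma ((d : ℝ) / 2) := Real.Gamma_pos_of_pos (by positivity)
  field_simp

lemma aux_prob {d : ℕ} (hd : 1 ≤ d) : IsProbabilityMeasure (sphereProb d) := by
  constructor
  rw [sphereProb, Measure.smul_apply, smul_eq_mul]
  have := aux_nontrivial hd
  apply ENNReal.inv_mul_cancel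
  · exact Measure.measure_univ_ne_zero.2 (Measure.toSphere_ne_zero (volume : Measure (E d)))
  · exact measure_ne_top _ _

lemma aux_integral_toSphere {d : ℕ} (hd : 1 ≤ d) (f : sphere (0 : E d) 1 → ℝ) :
    ∫ θ, f θ ∂((volume : Measure (E d)).toSphere) =
      ((d : ℝ) * unitBallVol d) * ∫ θ, f θ ∂(sphereProb d) := by
  have := aux_surf_pos hd
  rw [sphereProb, integral_smul_measure, ENNReal.toReal_inv, ← measureReal_def,
    ← aux_unitBallVol hd, smul_eq_mul, mul_inv_cancel_left₀ this.ne']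

lemma aux_gauss_integrable (k : ℕ) :
    Integrable (fun t : ℝ => t ^ k * Real.exp (-t ^ 2)) := by
  have := integrable_rpow_mul_exp_neg_mul_sq (b := 1) one_pos (s := (k : ℝ))
    (by have : (0 : ℝ) ≤ k := by positivity
        linarith)
  simpa [Real.rpow_natCast] using this

lemma aux_gauss_Ioi (k : ℕ) :
    ∫ t in Ioi (0 : ℝ), t ^ k * Real.exp (-t ^ 2) = Real.Gamma (((k : ℝ) + 1) / 2) / 2 := by
  have := integral_rpow_mul_exp_neg_rpow (p := 2) (q := (k : ℝ)) two_pos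
    (by have : (0 : ℝ) ≤ k := by positivity
        linarith)
  rw [show Real.Gamma (((k : ℝ) + 1) / 2) / 2 = 1 / 2 * Real.Gamma (((k : ℝ) + 1) / 2) by ring,
    ← this]
  simp [Real.rpow_natCast]

lemma aux_gauss_moment (k : ℕ) :
    ∫ t : ℝ, t ^ (2 * k) * Real.exp (-t ^ 2) = Real.Gamma ((k : ℝ) + 1 / 2) := by
  have h := integral_comp_abs (f := fun t : ℝ => t ^ (2 * k) * Real.exp (-t ^ 2))
  simp only [pow_mul, sq_abs] at h
  simp only [pow_mul]
  rw [h]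
  have := aux_gauss_Ioi (2 * k)
  simp only [pow_mul] at this
  rw [this]
  push_cast
  rw [show (2 * (k : ℝ) + 1) / 2 = k + 1 / 2 by ring]
  ring

lemma aux_gauss_E {d : ℕ} (hd : 1 ≤ d) (e : E d) (he : ‖e‖ = 1) (k : ℕ) :
    Integrable (fun x : E d => ⟪x, e⟫ ^ (2 * k) * Real.exp (-‖x‖ ^ 2)) ∧
    ∫ x : E d, ⟪x, e⟫ ^ (2 * k) * Real.exp (-‖x‖ ^ 2) =
      Real.Gamma ((k : ℝ) + 1 / 2) * √Real.pi ^ (d - 1) := by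
  let i0 : Fin d := ⟨0, hd⟩
  obtain ⟨b, hb⟩ : ∃ b : OrthonormalBasis (Fin d) ℝ (E d), ∀ i ∈ ({i0} : Set (Fin d)),
      b i = (fun _ => e) i := by
    apply Orthonormal.exists_orthonormalBasis_extension_of_card_eq
    · simp
    · constructor
      · intro i; simpa using he
      · intro i j hij
        exact absurd (Subsingleton.elim i j) hij
  have hbe : b i0 = e := hb i0 rfl
  let g : Fin d → ℝ → ℝ := fun i t => if i = i0 then t ^ (2 * k) * Real.exp (-t ^ 2)
    else Real.exp (-t ^ 2)
  have hgi : ∀ i, Integrable (g i) := by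
    intro i
    by_cases hi : i = i0
    · simpa [g, hi] using aux_gauss_integrable (2 * k)
    · simpa [g, hi] using aux_gauss_integrable 0
  have hmp : MeasurePreserving (fun x : E d => (WithLp.ofLp (b.repr x))) volume volume :=
    (PiLp.volume_preserving_ofLp (Fin d)).comp b.measurePreserving_repr
  have hfun : ∀ x : E d, ⟪x, e⟫ ^ (2 * k) * Real.exp (-‖x‖ ^ 2) =
      (fun y : Fin d → ℝ => ∏ i, g i (y i)) (WithLp.ofLp (b.repr x)) := by
    intro x
    have hn : ‖x‖ ^ 2 = ∑ i, (b.repr x i) ^ 2 := by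
      rw [← b.repr.norm_map x, EuclideanSpace.norm_sq_eq]
      simp
    have h1 : b.repr x i0 = ⟪x, e⟫ := by
      rw [b.repr_apply_apply, hbe, real_inner_comm]
    simp only
    rw [← Finset.mul_prod_erase Finset.univ _ (Finset.mem_univ i0), hn,
      ← Finset.add_sum_erase Finset.univ _ (Finset.mem_univ i0), neg_add, Real.exp_add,
      ← Finset.sum_neg_distrib, Real.exp_sum, h1]
    have : ∏ i ∈ Finset.univ.erase i0, g i (b.repr x i) =
        ∏ i ∈ Finset.univ.erase i0, Real.exp (-(b.repr x i) ^ 2) := by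
      apply Finset.prod_congr rfl
      intro i hi
      simp [g, Finset.ne_of_mem_erase hi]
    rw [this]
    simp only [g, if_true]
    ring
  simp only [hfun]
  have hemb : MeasurableEmbedding (fun x : E d => (WithLp.ofLp (b.repr x))) :=
    ((b.measurableEquiv).trans (MeasurableEquiv.toLp 2 (Fin d → ℝ)).symm).measurableEmbedding
  constructor
  · exact (hmp.integrable_comp_emb hemb).2 (Integrable.fintype_prod hgi)
  · rw [hmp.integral_comp hemb (fun y : Fin d → ℝ => ∏ i, g i (y i)),
      integral_fintype_prod_volume_eq_prod, 
      ← Finset.mul_prod_erase Finset.univ _ (Finset.mem_univ i0)]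
    congr 1
    · simp only [g, if_true]
      exact aux_gauss_moment k
    · rw [Finset.prod_congr rfl (g := fun _ => √Real.pi)]
      · simp
      · intro i hi
        simp only [g, Finset.ne_of_mem_erase hi, if_false]
        simpa using integral_gaussian 1

lemma aux_moment {d : ℕ} (hd : 1 ≤ d) (e : E d) (he : ‖e‖ = 1) (k : ℕ) :
    ∫ θ : sphere (0 : E d) 1, ⟪(θ : E d), e⟫ ^ (2 * k) ∂(sphereProb d) =
      Real.Gamma ((k : ℝ) + 1 / 2) * Real.Gamma ((d : ℝ) / 2) /
        (√Real.pi * Real.Gamma ((k : ℝ) + (d : ℝ) / 2)) := by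
  have h0 : (0 : ℝ) < d := by exact_mod_cast hd
  obtain ⟨h1, h2⟩ := aux_gauss_E hd e he k
  rw [aux_polar hd _ h1] at h2
  set I := ∫ θ : sphere (0 : E d) 1, ⟪(θ : E d), e⟫ ^ (2 * k) ∂(sphereProb d) with hI
  have h3 : ∀ ρ ∈ Ioi (0 : ℝ), ρ ^ (d - 1) * (∫ θ : sphere (0 : E d) 1,
      (fun x : E d => ⟪x, e⟫ ^ (2 * k) * Real.exp (-‖x‖ ^ 2)) (ρ • (θ : E d))
        ∂((volume : Measure (E d)).toSphere)) =
      ((d : ℝ) * unitBallVol d * I) * (ρ ^ (2 * k + d - 1) * Real.exp (-ρ ^ 2)) := by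
    intro ρ hρ
    have hρ' : (0 : ℝ) < ρ := hρ
    rw [aux_integral_toSphere hd]
    have : ∀ θ : sphere (0 : E d) 1, 
        (fun x : E d => ⟪x, e⟫ ^ (2 * k) * Real.exp (-‖x‖ ^ 2)) (ρ • (θ : E d)) =
        (ρ ^ (2 * k) * Real.exp (-ρ ^ 2)) * ⟪(θ : E d), e⟫ ^ (2 * k) := by
      intro θ
      simp only [inner_smul_left, norm_smul, norm_eq_of_mem_sphere, Real.norm_eq_abs, mul_one,
        sq_abs, mul_pow]
      simp
      ring
    simp only [this]
    rw [integral_const_mul, ← hI, show 2 * k + d - 1 = 2 * k + (d - 1) by omega, pow_add]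
    ring
  rw [setIntegral_congr_fun measurableSet_Ioi h3, integral_const_mul, aux_gauss_Ioi,
    aux_surf_eq hd] at h2
  have e1 : (((2 * k + d - 1 : ℕ) : ℝ) + 1) / 2 = k + (d : ℝ) / 2 := by
    rw [Nat.cast_sub (by omega)]
    push_cast
    ring
  rw [e1] at h2
  have p1 : 0 < Real.Gamma ((d : ℝ) / 2) := Real.Gamma_pos_of_pos (by positivity)
  have p2 : 0 < Real.Gamma ((k : ℝ) + (d : ℝ) / 2) := Real.Gamma_pos_of_pos (by positivity)
  have p3 : 0 < √Real.pi := by positivity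
  have e2 : Real.pi ^ ((d : ℝ) / 2) = √Real.pi ^ (d - 1) * √Real.pi := by
    rw [← pow_succ, show d - 1 + 1 = d by omega, Real.sqrt_eq_rpow, ← Real.rpow_natCast,
      ← Real.rpow_mul Real.pi_pos.le]
    congr 1
    ring
  rw [e2] at h2
  have p4 : 0 < √Real.pi ^ (d - 1) := by positivity
  rw [eq_div_iff (by positivity)]
  have h5 : √Real.pi ^ (d - 1) * (I * (√Real.pi * Real.Gamma ((k : ℝ) + (d : ℝ) / 2))) = 
     √Real.pi ^ (d - 1) * (Real.Gamma ((k : ℝ) + 1 / 2) * Real.Gamma ((d : ℝ) / 2)) := by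
    rw [← mul_assoc (√Real.pi ^ (d - 1)) (Real.Gamma _), mul_comm (√Real.pi ^ (d - 1)) (Real.Gamma _),
      ← h2]
    field_simp
  exact mul_left_cancel₀ p4.ne' h5

lemma aux_gamma_half (k : ℕ) :
    Real.Gamma ((k : ℝ) + 1 / 2) * (4 ^ k * (k.factorial : ℝ)) =
      ((2 * k).factorial : ℝ) * √Real.pi := by
  induction k with
  | zero => simp [-one_div, Real.Gamma_one_half_eq]
  | succ k ih =>
    have : ((k + 1 : ℕ) : ℝ) + 1 / 2 = ((k : ℝ) + 1 / 2) + 1 := by push_cast; ring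
    rw [this, Real.Gamma_add_one (by positivity), show 2 * (k + 1) = 2 * k + 1 + 1 by ring,
      Nat.factorial_succ, Nat.factorial_succ, Nat.factorial_succ]
    push_cast
    linear_combination (4 * (k + 1 / 2) * ((k : ℝ) + 1)) * ih

/-- the spherical mean of the cosine -/
lemma aux_cos_series {d : ℕ} (hd : 1 ≤ d) (e : E d) (he : ‖e‖ = 1) (t : ℝ) :
    HasSum (fun k : ℕ => Real.Gamma ((d : ℝ) / 2) * ((-1 : ℝ) ^ k * (Real.pi * t) ^ (2 * k) /
        (k.factorial * Real.Gamma ((k : ℝ) + (d : ℝ) / 2))))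
      (∫ θ : sphere (0 : E d) 1, Real.cos (2 * Real.pi * t * ⟪(θ : E d), e⟫) ∂(sphereProb d)) := by
  have := aux_prob hd
  have h0 : (0 : ℝ) < d := by exact_mod_cast hd
  let F : ℕ → sphere (0 : E d) 1 → ℝ := fun k θ =>
    (-1 : ℝ) ^ k * (2 * Real.pi * t * ⟪(θ : E d), e⟫) ^ (2 * k) / ((2 * k).factorial : ℝ)
  have hF : ∀ k, Continuous (F k) := by
    intro k
    simp only [F]
    fun_prop
  have hb : ∀ k θ, ‖F k θ‖ ≤ (2 * Real.pi * |t|) ^ (2 * k) / ((2 * k).factorial : ℝ) := by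
    intro k θ
    have hin : |⟪(θ : E d), e⟫| ≤ 1 := by
      have := abs_real_inner_le_norm (θ : E d) e
      rwa [norm_eq_of_mem_sphere, he, one_mul] at this
    simp only [F, norm_div, norm_mul, norm_pow, norm_neg, norm_one, one_pow, one_mul,
      Real.norm_eq_abs, Nat.abs_cast, abs_of_pos Real.pi_pos, abs_two]
    refine div_le_div_of_nonneg_right (pow_le_pow_left₀ (by positivity) ?_ _) (by positivity)
    exact mul_le_of_le_one_right (by positivity) hin
  have hint : ∀ k, Integrable (F k) (sphereProb d) := fun k =>
    Integrable.of_bound (hF k).aestronglyMeasurable _ (Eventually.of_forall (hb k))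
  have hsum0 : Summable fun k : ℕ => (2 * Real.pi * |t|) ^ (2 * k) / ((2 * k).factorial : ℝ) :=
    (Real.summable_pow_div_factorial (2 * Real.pi * |t|)).comp_injective
      (i := fun k : ℕ => 2 * k) (fun a b hab => by simpa using hab)
  have hsum : Summable fun k => ∫ θ, ‖F k θ‖ ∂(sphereProb d) := by
    refine Summable.of_nonneg_of_le (fun k => integral_nonneg fun _ => norm_nonneg _)
      (fun k => ?_) hsum0
    calc ∫ θ, ‖F k θ‖ ∂(sphereProb d) 
        ≤ ∫ θ, (2 * Real.pi * |t|) ^ (2 * k) / ((2 * k).factorial : ℝ) ∂(sphereProb d) :=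
          integral_mono (hint k).norm (integrable_const _) (hb k)
      _ = _ := by simp
  have key := hasSum_integral_of_summable_integral_norm hint hsum
  have h1 : ∀ θ, ∑' k, F k θ = Real.cos (2 * Real.pi * t * ⟪(θ : E d), e⟫) := fun θ =>
    (Real.hasSum_cos _).tsum_eq
  simp only [h1] at key
  convert! key using 1
  ext k
  simp only [F, mul_pow _ (⟪_, _⟫), mul_div_assoc]
  have : ∀ θ : sphere (0 : E d) 1, (-1 : ℝ) ^ k * ((2 * Real.pi * t) ^ (2 * k) *
      ⟪(θ : E d), e⟫ ^ (2 * k) / ((2 * k).factorial : ℝ)) = 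
      ((-1 : ℝ) ^ k * (2 * Real.pi * t) ^ (2 * k) / ((2 * k).factorial : ℝ)) * 
      ⟪(θ : E d), e⟫ ^ (2 * k) := by intro θ; ring
  simp only [← mul_div_assoc] at this ⊢
  simp only [← mul_assoc] at this ⊢
  simp only [this]
  rw [integral_const_mul, aux_moment hd e he]
  have p2 : 0 < Real.Gamma ((k : ℝ) + (d : ℝ) / 2) := Real.Gamma_pos_of_pos (by positivity)
  have p3 : 0 < √Real.pi := by positivity
  have p4 : (0 : ℝ) < (2 * k).factorial := by positivity
  have p5 : (0 : ℝ) < k.factorial := by positivity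
  have hg := aux_gamma_half k
  have hg' : Real.Gamma ((k : ℝ) + 1 / 2) = ((2 * k).factorial : ℝ) * √Real.pi /
      (4 ^ k * (k.factorial : ℝ)) := by
    rw [eq_div_iff (by positivity), hg]
  rw [hg', show (2 * Real.pi * t) ^ (2 * k) = 4 ^ k * (Real.pi * t) ^ (2 * k) by
    rw [mul_assoc, mul_pow, pow_mul 2 2 k]; norm_num]
  field_simp

lemma aux_bessel {d : ℕ} (hd : 1 ≤ d) (e : E d) (he : ‖e‖ = 1) (t : ℝ) (ht : 0 < t) :
    2 * Real.pi * t ^ (1 - (d : ℝ) / 2) * besselJ ((d : ℝ) / 2 - 1) (2 * Real.pi * t) =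
      ((d : ℝ) * unitBallVol d) *
      ∫ θ : sphere (0 : E d) 1, Real.cos (2 * Real.pi * t * ⟪(θ : E d), e⟫) ∂(sphereProb d) := by
  have h0 : (0 : ℝ) < d := by exact_mod_cast hd
  rw [← (aux_cos_series hd e he t).tsum_eq, besselJ, ← tsum_mul_left, ← tsum_mul_left,
    aux_surf_eq hd]
  congr 1
  ext k
  have p1 : 0 < Real.Gamma ((d : ℝ) / 2) := Real.Gamma_pos_of_pos (by positivity)
  have p2 : 0 < Real.Gamma ((k : ℝ) + (d : ℝ) / 2) := Real.Gamma_pos_of_pos (by positivity)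
  have p5 : (0 : ℝ) < k.factorial := by positivity
  rw [show (d : ℝ) / 2 - 1 + k + 1 = k + (d : ℝ) / 2 by ring,
    show 2 * Real.pi * t / 2 = Real.pi * t by ring,
    show (d : ℝ) / 2 - 1 + 2 * k = ((d : ℝ) / 2 - 1) + ((2 * k : ℕ) : ℝ) by push_cast; ring,
    Real.rpow_add (by positivity), Real.rpow_natCast, Real.mul_rpow Real.pi_pos.le ht.le]
  have e1 : t ^ (1 - (d : ℝ) / 2) * t ^ ((d : ℝ) / 2 - 1) = 1 := by
    rw [← Real.rpow_add ht]; simp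
  have e2 : Real.pi * Real.pi ^ ((d : ℝ) / 2 - 1) = Real.pi ^ ((d : ℝ) / 2) := by
    rw [Real.rpow_sub Real.pi_pos, Real.rpow_one]
    field_simp
  rw [← e2]
  have p6 : 0 < Real.pi ^ ((d : ℝ) / 2 - 1) := by positivity
  generalize t ^ (1 - (d : ℝ) / 2) = u at *
  generalize t ^ ((d : ℝ) / 2 - 1) = v at *
  generalize Real.pi ^ ((d : ℝ) / 2 - 1) = w at *
  field_simp
  linear_combination e1

lemma aux_fourier_toLp {d : ℕ} {f : E d → ℂ} (h1 : Integrable f) (h2 : MemLp f 2) :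
    ((𝓕 (h2.toLp f) : Lp ℂ 2 (volume : Measure (E d))) : E d → ℂ) =ᵐ[volume] 𝓕 f := by
  have hcont : Continuous (𝓕 f) := 
    VectorFourier.fourierIntegral_continuous Real.continuous_fourierChar
      (by exact continuous_inner) h1
  refine ae_eq_of_integral_contDiff_smul_eq ?_ hcont.locallyIntegrable ?_
  · exact (Lp.memLp _).locallyIntegrable (by norm_num)
  intro g hg hgc
  have hgc' : HasCompactSupport (fun x => (g x : ℂ)) := hgc.comp_left (g := ((↑) : ℝ → ℂ)) (by simp)
  have hg' : ContDiff ℝ (⊤ : ℕ∞) (fun x => (g x : ℂ)) := Complex.ofRealCLM.contDiff.comp hg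
  let G : SchwartzMap (E d) ℂ := hgc'.toSchwartzMap hg'
  have hG : ∀ x, G x = (g x : ℂ) := fun x => rfl
  have key := congrArg (fun T => T G) (Lp.fourier_toTemperedDistribution_eq (h2.toLp f))
  simp only [TemperedDistribution.fourier_apply, Lp.toTemperedDistribution_apply] at key
  have l1 : ∫ x, g x • (𝓕 (h2.toLp f) : Lp ℂ 2 (volume : Measure (E d))) x =
      ∫ x, G x • (𝓕 (h2.toLp f) : Lp ℂ 2 (volume : Measure (E d))) x := by
    simp [hG]
  rw [l1, ← key]
  have l2 : ∫ x, (𝓕 G) x • (h2.toLp f : Lp ℂ 2 (volume : Measure (E d))) x = ∫ x, f x • (𝓕 (G : E d → ℂ)) x := by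
    apply integral_congr_ae
    filter_upwards [h2.coeFn_toLp] with x hx
    rw [hx, SchwartzMap.fourier_coe, smul_eq_mul, smul_eq_mul, mul_comm]
  rw [l2]
  have := VectorFourier.integral_fourierIntegral_smul_eq_flip (μ := (volume : Measure (E d)))
    (ν := (volume : Measure (E d))) (L := innerₗ (E d)) (f := f) (g := (G : E d → ℂ)) Real.continuous_fourierChar
      (by exact continuous_inner) h1 G.integrable
  rw [flip_innerₗ] at this
  refine Eq.trans (Eq.symm this) ?_
  apply integral_congr_ae
  filter_upwards with x
  rw [smul_eq_mul, mul_comm, hG]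
  rw [Complex.real_smul]
  rfl

lemma aux_ind {d : ℕ} {D : Set (E d)} (hDmeas : MeasurableSet D) (hDbdd : Bornology.IsBounded D) :
    Integrable (indC D) ∧ MemLp (indC D) 2 := by
  have hfin : volume D ≠ ⊤ := hDbdd.measure_lt_top.ne
  have : ∀ p, MemLp (indC D) p := fun p => memLp_indicator_const p hDmeas 1 (Or.inr hfin)
  exact ⟨memLp_one_iff_integrable.1 (this 1), this 2⟩

lemma aux_fourier_translate {d : ℕ} (f : E d → ℂ) (x ξ : E d) :
    𝓕 (fun y => f (y - x)) ξ = Complex.exp (-(2 * Real.pi * ⟪x, ξ⟫ : ℝ) * Complex.I) * 𝓕 f ξ := by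
  rw [Real.fourier_eq', Real.fourier_eq']
  rw [← integral_add_right_eq_self _ x, ← integral_const_mul]
  congr 1
  ext y
  simp only [add_sub_cancel_right, smul_eq_mul, inner_add_left, ← mul_assoc, ← Complex.exp_add]
  congr 2
  push_cast
  ring

/-- Plancherel for the covariogram. -/
lemma aux_cov {d : ℕ} {D : Set (E d)} (hDmeas : MeasurableSet D)
    (hDbdd : Bornology.IsBounded D) :
    Integrable (fun ξ => ‖𝓕 (indC D) ξ‖ ^ 2) ∧ 
    ∀ x, covariogram D x = ∫ ξ, ‖𝓕 (indC D) ξ‖ ^ 2 * Real.cos (2 * Real.pi * ⟪x, ξ⟫) := by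
  obtain ⟨h1, h2⟩ := aux_ind hDmeas hDbdd
  have hae := aux_fourier_toLp h1 h2
  have hL2 : MemLp (𝓕 (indC D)) 2 := (memLp_congr_ae hae).1 (Lp.memLp _)
  have hint : Integrable (fun ξ => ‖𝓕 (indC D) ξ‖ ^ 2) := hL2.integrable_norm_pow (by norm_num)
  refine ⟨hint, fun x => ?_⟩
  set f := indC D with hf
  let g : E d → ℂ := fun y => f (y - x)
  have g1 : Integrable g := h1.comp_sub_right x
  have g2 : MemLp g 2 := h2.comp_measurePreserving (measurePreserving_sub_right volume x)
  have gae := aux_fourier_toLp g1 g2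
  have key := Lp.inner_fourier_eq (h2.toLp f) (g2.toLp g)
  rw [L2.inner_def, L2.inner_def] at key
  have r : ∫ a, inner ℂ ((h2.toLp f) a) ((g2.toLp g) a) = (covariogram D x : ℂ) := by
    rw [covariogram, ← integral_complex_ofReal]
    apply integral_congr_ae
    filter_upwards [h2.coeFn_toLp, g2.coeFn_toLp] with a ha hb
    rw [ha, hb]
    simp only [g, hf, indC, indicator]
    split_ifs <;> simp
  have l : ∫ a, inner ℂ ((𝓕 (h2.toLp f) : Lp ℂ 2 (volume : Measure (E d))) a)
      ((𝓕 (g2.toLp g) : Lp ℂ 2 (volume : Measure (E d))) a) = 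
      ∫ ξ, Complex.exp (-(2 * Real.pi * ⟪x, ξ⟫ : ℝ) * Complex.I) * ((‖𝓕 f ξ‖ ^ 2 : ℝ) : ℂ) := by
    apply integral_congr_ae
    filter_upwards [hae, gae] with a ha hb
    rw [ha, hb, aux_fourier_translate, RCLike.inner_apply, mul_assoc, Complex.mul_conj,
      Complex.normSq_eq_norm_sq]
  rw [l, r] at key
  have key2 := congrArg Complex.re key
  rw [Complex.ofReal_re] at key2
  rw [← key2]
  have hi : Integrable (fun ξ => Complex.exp (-(2 * Real.pi * ⟪x, ξ⟫ : ℝ) * Complex.I) *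
      ((‖𝓕 f ξ‖ ^ 2 : ℝ) : ℂ)) := by
    refine (hint.ofReal (𝕜 := ℂ)).bdd_mul (c := 1) ?_ ?_
    · apply Continuous.aestronglyMeasurable
      fun_prop
    · refine Eventually.of_forall fun ξ => ?_
      rw [← Complex.ofReal_neg, Complex.norm_exp_ofReal_mul_I]
  have := integral_re hi
  refine Eq.trans this.symm ?_
  congr 1
  ext ξ
  rw [← Complex.ofReal_neg]
  rw [mul_comm]
  change (((‖𝓕 f ξ‖ ^ 2 : ℝ) : ℂ) *
    Complex.exp (((-(2 * Real.pi * ⟪x, ξ⟫) : ℝ) : ℂ) * Complex.I)).re = _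
  rw [Complex.re_ofReal_mul, Complex.exp_ofReal_mul_I_re, Real.cos_neg]

lemma aux_sphere_meas_cont {d : ℕ} (h : ℝ) :
    Continuous (fun p : sphere (0 : E d) 1 × E d =>
      1 - Real.cos (2 * Real.pi * ⟪h • (p.1 : E d), p.2⟫)) := by
  fun_prop

/-- the Hankel-type identity
`∫₀^∞ (dκ_d − 2π(hρ)^{1−d/2} J_{d/2−1}(2πhρ)) ρ^{d−1} γ̄̂_D(ρ) dρ = γ̄_D(0) − γ̄_D(h)`. -/
theorem hankel_isoCov_identity (d : ℕ) (hd : 1 ≤ d) (D : Set (E d))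
    (hDmeas : MeasurableSet D) (hDbdd : Bornology.IsBounded D) (h : ℝ) (hh : 0 < h) :
    ∫ ρ in Set.Ioi (0 : ℝ),
        ((d : ℝ) * unitBallVol d -
            2 * Real.pi * (h * ρ) ^ (1 - (d : ℝ) / 2) *
              besselJ ((d : ℝ) / 2 - 1) (2 * Real.pi * h * ρ)) *
          ρ ^ ((d : ℝ) - 1) * avgFT D ρ =
      isoCov D 0 - isoCov D h := by
  have hprob := aux_prob hd
  obtain ⟨hint, hcov⟩ := aux_cov hDmeas hDbdd
  set F : E d → ℝ := fun ξ => ‖𝓕 (indC D) ξ‖ ^ 2 with hF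
  -- the two-variable integrand
  let Φ : sphere (0 : E d) 1 × E d → ℝ := fun p =>
    (1 - Real.cos (2 * Real.pi * ⟪h • (p.1 : E d), p.2⟫)) * F p.2
  have hΦ : Integrable Φ ((sphereProb d).prod volume) := by
    have h1 : Integrable (fun p : sphere (0 : E d) 1 × E d => F p.2)
        ((sphereProb d).prod volume) := hint.comp_snd _
    refine h1.bdd_mul (c := 2) (aux_sphere_meas_cont h).aestronglyMeasurable ?_
    refine Eventually.of_forall fun p => ?_
    rw [Real.norm_eq_abs, abs_le]
    constructor <;>
      linarith [Real.cos_le_one (2 * Real.pi * ⟪h • (p.1 : E d), p.2⟫),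
        Real.neg_one_le_cos (2 * Real.pi * ⟪h • (p.1 : E d), p.2⟫)]
  let e0 : E d := EuclideanSpace.single ⟨0, hd⟩ 1
  have he0 : ‖e0‖ = 1 := by simp [e0]
  let K : ℝ → ℝ := fun t =>
    ∫ θ : sphere (0 : E d) 1, Real.cos (2 * Real.pi * t * ⟪(θ : E d), e0⟫) ∂(sphereProb d)
  have hK : ∀ (t : ℝ) (e : E d), ‖e‖ = 1 →
      ∫ θ : sphere (0 : E d) 1, Real.cos (2 * Real.pi * t * ⟪(θ : E d), e⟫) ∂(sphereProb d)
        = K t := fun t e he =>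
    (aux_cos_series hd e he t).unique (aux_cos_series hd e0 he0 t)
  have hKn : ∀ ξ : E d, ∫ θ : sphere (0 : E d) 1,
      Real.cos (2 * Real.pi * ⟪h • (θ : E d), ξ⟫) ∂(sphereProb d) = K (h * ‖ξ‖) := by
    intro ξ
    by_cases hξ : ξ = 0
    · simp [hξ, K]
    have hn : ‖ξ‖ ≠ 0 := norm_ne_zero_iff.2 hξ
    rw [← hK (h * ‖ξ‖) (‖ξ‖⁻¹ • ξ) (by rw [norm_smul, norm_inv, norm_norm, inv_mul_cancel₀ hn])]
    congr 1
    ext θ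
    rw [real_inner_smul_left, real_inner_smul_right]
    congr 1
    field_simp
  have hcosint : ∀ ξ : E d, Integrable (fun θ : sphere (0 : E d) 1 =>
      Real.cos (2 * Real.pi * ⟪h • (θ : E d), ξ⟫)) (sphereProb d) := by
    intro ξ
    refine Integrable.of_bound (C := 1) (Continuous.aestronglyMeasurable (by fun_prop)) ?_
    exact Eventually.of_forall fun θ => Real.abs_cos_le_one _
  have hinner : ∀ ξ : E d, ∫ θ, Φ (θ, ξ) ∂(sphereProb d) = (1 - K (h * ‖ξ‖)) * F ξ := by
    intro ξ
    simp only [Φ]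
    rw [integral_mul_const, integral_sub (integrable_const _) (hcosint ξ), hKn]
    simp
  have hcosF : ∀ x : E d, Integrable (fun ξ => F ξ * Real.cos (2 * Real.pi * ⟪x, ξ⟫)) := by
    intro x
    refine hint.mul_bdd (c := 1) (Continuous.aestronglyMeasurable (by fun_prop)) ?_
    exact Eventually.of_forall fun θ => Real.abs_cos_le_one _
  have hcov0 : covariogram D 0 = ∫ ξ, F ξ := by
    rw [hcov 0]; simp [hF]
  have houter : ∀ θ : sphere (0 : E d) 1,
      ∫ ξ, Φ (θ, ξ) = covariogram D 0 - covariogram D (h • (θ : E d)) := by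
    intro θ
    rw [hcov0, hcov, ← integral_sub hint (hcosF _)]
    congr 1
    ext ξ
    simp only [Φ]
    ring
  have hRint : Integrable (fun θ : sphere (0 : E d) 1 =>
      covariogram D 0 - covariogram D (h • (θ : E d))) (sphereProb d) := by
    simpa only [houter] using hΦ.integral_prod_left
  have hRint2 : Integrable (fun θ : sphere (0 : E d) 1 =>
      covariogram D (h • (θ : E d))) (sphereProb d) := by
    refine ((integrable_const (covariogram D 0)).sub hRint).congr
      (Eventually.of_forall fun θ => ?_)
    simp
  have hRHS : isoCov D 0 - isoCov D h = ∫ ξ, (1 - K (h * ‖ξ‖)) * F ξ := by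
    simp only [← hinner]
    rw [← integral_integral_swap (f := fun θ ξ => Φ (θ, ξ)) hΦ]
    simp only [houter]
    rw [integral_sub (integrable_const _) hRint2]
    simp [isoCov]
  have hGint : Integrable (fun ξ => (1 - K (h * ‖ξ‖)) * F ξ) := by
    simpa only [hinner] using hΦ.integral_prod_right
  rw [hRHS, aux_polar hd _ hGint]
  refine setIntegral_congr_fun measurableSet_Ioi fun ρ hρ => ?_
  have hρ' : (0 : ℝ) < ρ := hρ
  rw [mul_assoc (2 * Real.pi) h ρ, aux_bessel hd e0 he0 (h * ρ) (by positivity),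
    aux_integral_toSphere hd]
  have hb : ∀ θ : sphere (0 : E d) 1, (1 - K (h * ‖ρ • (θ : E d)‖)) * F (ρ • (θ : E d)) =
      (1 - K (h * ρ)) * F (ρ • (θ : E d)) := by
    intro θ
    rw [norm_smul, norm_eq_of_mem_sphere, Real.norm_eq_abs, abs_of_pos hρ', mul_one]
  simp only [hb]
  rw [integral_const_mul]
  have hp : ρ ^ ((d : ℝ) - 1) = ρ ^ (d - 1) := by
    rw [← Real.rpow_natCast, Nat.cast_sub hd, Nat.cast_one]
  rw [hp]
  change ((d : ℝ) * unitBallVol d - (d : ℝ) * unitBallVol d * K (h * ρ)) * _ * avgFT D ρ =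
    ρ ^ (d - 1) * ((d : ℝ) * unitBallVol d * ((1 - K (h * ρ)) * avgFT D ρ))
  ring

end
end
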